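/- arXiv:2112.02840 — 9 statements merged into one kernel-verified Lean document; each statement's English description precedes it below -/
import Mathlib

section
/- Let η > 0 and m > 0 be constants, let k be an integer with 1 ≤ k ≤ N, let f : [0,1] × [0,∞) → [0,∞) be continuous, and let v ∈ K. If f(t, v(t)) ≥ η·v(t)^m for all t ∈ [1/4, 3/4], then T_{k,f}(v)(1/4) ≥ Γ_k · η^{1/k} · (1/4)^{m/k} · ‖v‖^{m/k}. -/
/-!
The integrand of `T_{k,f}(v)(1/4)` is nonnegative on `[1/4, 1]`, so the outer integral may be
restricted to `[1/4, 3/4]`; likewise the inner integral over `[0, τ]` dominates the one over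
`[1/4, τ]`. On `[1/4, 3/4]` membership in the cone gives `v ≥ ‖v‖/4`, hence
`f(s, v(s)) ≥ A` with `A = η (‖v‖/4)^m`. Pulling the constant `A` out of both
integrals leaves `A^{1/k} Γ_k`. Every comparison of integrals needs integrability, which follows
from continuity of both integrands away from `τ = 0` (`continuousOn_outer`).
-/

open Set Filter MeasureTheory

/-- Supremum norm on `C([0,1])` (applied to a real function, using only its values on `[0,1]`). -/
noncomputable def supNorm (v : ℝ → ℝ) : ℝ :=
  sSup ((fun t => |v t|) '' Icc (0:ℝ) 1)

/-- The cone `K = {v ∈ C([0,1]) : v ≥ 0 on [0,1], min_{1/4 ≤ t ≤ 3/4} v(t) ≥ ‖v‖/4}`. -/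
def inK (v : ℝ → ℝ) : Prop :=
  ContinuousOn v (Icc (0:ℝ) 1) ∧ (∀ t ∈ Icc (0:ℝ) 1, 0 ≤ v t) ∧
    ∀ t ∈ Icc (1/4 : ℝ) (3/4 : ℝ), supNorm v / 4 ≤ v t

/-- The operator `T_{k,f}`:
`T_{k,f}(v)(t) = ∫_t^1 ((k/τ^{N-k}) ∫_0^τ (s^{N-1}/C(N-1,k-1)) f(s, v(s)) ds)^{1/k} dτ`. -/
noncomputable def Thess (N k : ℕ) (f : ℝ → ℝ → ℝ) (v : ℝ → ℝ) : ℝ → ℝ := fun t =>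
  ∫ τ in t..1, (((k : ℝ) / τ ^ (N - k)) *
      ∫ s in (0:ℝ)..τ, s ^ (N - 1) / ((N - 1).choose (k - 1)) * f s (v s)) ^ ((1 : ℝ) / (k : ℝ))

/-- `Γ_k = ∫_{1/4}^{3/4} ((k/τ^{N-k}) ∫_{1/4}^τ (s^{N-1}/C(N-1,k-1)) ds)^{1/k} dτ`. -/
noncomputable def Gam (N k : ℕ) : ℝ :=
  ∫ τ in (1/4 : ℝ)..(3/4 : ℝ), (((k : ℝ) / τ ^ (N - k)) *
      ∫ s in (1/4 : ℝ)..τ, s ^ (N - 1) / ((N - 1).choose (k - 1))) ^ ((1 : ℝ) / (k : ℝ))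

lemma supNorm_nonneg (v : ℝ → ℝ) : 0 ≤ supNorm v := by
  apply Real.sSup_nonneg
  rintro _ ⟨t, _, rfl⟩
  exact abs_nonneg _

/-- The outer integrand shared by `Thess` (with `a = 0`) and `Gam` (with `a = 1/4`) is continuous
on any `[c, b]` with `c > 0` inside the interval where the inner integrand `g` is continuous. -/
lemma continuousOn_outer (k n : ℕ) (g : ℝ → ℝ) {a b c : ℝ} (hac : a ≤ c) (hc : 0 < c)
    (hcb : c ≤ b) (hg : ContinuousOn g (Icc a b)) :
    ContinuousOn (fun τ : ℝ => (((k : ℝ) / τ ^ n) * ∫ s in a..τ, g s) ^ ((1 : ℝ) / (k : ℝ)))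
      (Icc c b) := by
  have hab : a ≤ b := hac.trans hcb
  have hG : ContinuousOn (fun τ => ∫ s in a..τ, g s) (Icc a b) := by
    have hi : IntegrableOn g (uIcc a b) := by
      rw [uIcc_of_le hab]
      exact hg.integrableOn_Icc
    simpa [uIcc_of_le hab] using intervalIntegral.continuousOn_primitive_interval hi
  refine ContinuousOn.rpow_const (ContinuousOn.mul ?_ (hG.mono (Icc_subset_Icc_left hac))) ?_
  · exact continuousOn_const.div (by fun_prop) fun τ hτ => (pow_pos (hc.trans_le hτ.1) n).ne'
  · exact fun _ _ => Or.inr (by positivity)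

/-- Lemma 3.1 lower bound. -/
theorem stmt_0 (N k : ℕ) (hN : 2 ≤ N) (hk1 : 1 ≤ k) (hkN : k ≤ N)
    (f : ℝ → ℝ → ℝ)
    (hfc : ContinuousOn (fun p : ℝ × ℝ => f p.1 p.2) (Icc (0:ℝ) 1 ×ˢ Ici (0:ℝ)))
    (hfnn : ∀ t ∈ Icc (0:ℝ) 1, ∀ c ∈ Ici (0:ℝ), 0 ≤ f t c)
    (η m : ℝ) (hη : 0 < η) (hm : 0 < m)
    (v : ℝ → ℝ) (hv : inK v)
    (hlow : ∀ t ∈ Icc (1/4 : ℝ) (3/4 : ℝ), η * v t ^ m ≤ f t (v t)) :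
    Gam N k * η ^ ((1:ℝ) / (k : ℝ)) * (1/4 : ℝ) ^ (m / (k : ℝ)) *
        supNorm v ^ (m / (k : ℝ)) ≤ Thess N k f v (1/4 : ℝ) := by
  obtain ⟨hvc, hv0, hvK⟩ := hv
  have hS := supNorm_nonneg v
  set S := supNorm v
  set A : ℝ := η * (S / 4) ^ m with hA
  have hA0 : 0 ≤ A := by positivity
  have hAk : A ^ ((1:ℝ) / k) = η ^ ((1:ℝ) / k) * (1/4 : ℝ) ^ (m / k) * S ^ (m / k) := by
    rw [hA, Real.mul_rpow hη.le (by positivity), ← Real.rpow_mul (by positivity),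
      show m * (1 / (k:ℝ)) = m / k by ring, show S / 4 = 1 / 4 * S by ring,
      Real.mul_rpow (by norm_num) hS, mul_assoc]
  set w : ℝ → ℝ := fun s => s ^ (N - 1) / ((N - 1).choose (k - 1)) with hw
  have hwc : Continuous w := by fun_prop
  have hw0 : ∀ s, 0 ≤ s → 0 ≤ w s := fun s hs => by positivity
  set g : ℝ → ℝ := fun s => w s * f s (v s) with hg
  have hgc : ContinuousOn g (Icc 0 1) := by
    refine hwc.continuousOn.mul (hfc.comp (continuousOn_id.prodMk hvc) ?_)
    exact fun s hs => ⟨hs, hv0 s hs⟩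
  have hg0 : ∀ s ∈ Icc (0:ℝ) 1, 0 ≤ g s := fun s hs =>
    mul_nonneg (hw0 s hs.1) (hfnn s hs _ (hv0 s hs))
  have hgi : ∀ a b : ℝ, 0 ≤ a → a ≤ b → b ≤ 1 → IntervalIntegrable g volume a b :=
    fun a b ha hab hb =>
      (hgc.mono (Icc_subset_Icc ha hb)).intervalIntegrable_of_Icc hab
  set H : ℝ → ℝ := fun τ =>
    (((k : ℝ) / τ ^ (N - k)) * ∫ s in (0:ℝ)..τ, g s) ^ ((1 : ℝ) / (k : ℝ)) with hH
  set L : ℝ → ℝ := fun τ =>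
    (((k : ℝ) / τ ^ (N - k)) * ∫ s in (1/4:ℝ)..τ, w s) ^ ((1 : ℝ) / (k : ℝ)) with hL
  have hHc : ContinuousOn H (Icc (1/4) 1) :=
    continuousOn_outer k (N - k) g (by norm_num) (by norm_num) (by norm_num) hgc
  have hLc : ContinuousOn L (Icc (1/4) (3/4)) :=
    continuousOn_outer k (N - k) w le_rfl (by norm_num) (by norm_num) hwc.continuousOn
  have hH0 : ∀ τ ∈ Icc (1/4:ℝ) 1, 0 ≤ H τ := fun τ hτ => by
    have h0 : (0:ℝ) ≤ τ := le_trans (by norm_num) hτ.1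
    have : 0 ≤ ∫ s in (0:ℝ)..τ, g s :=
      intervalIntegral.integral_nonneg h0 fun s hs => hg0 s ⟨hs.1, hs.2.trans hτ.2⟩
    exact Real.rpow_nonneg (by positivity) _
  have hcmp : ∀ τ ∈ Icc (1/4:ℝ) (3/4), A ^ ((1:ℝ) / k) * L τ ≤ H τ := fun τ hτ => by
    have h0 : (0:ℝ) ≤ τ := le_trans (by norm_num) hτ.1
    have h1 : τ ≤ 1 := hτ.2.trans (by norm_num)
    have hW0 : 0 ≤ ∫ s in (1/4:ℝ)..τ, w s :=
      intervalIntegral.integral_nonneg hτ.1 fun s hs => hw0 s (le_trans (by norm_num) hs.1)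
    have hin : A * ∫ s in (1/4:ℝ)..τ, w s ≤ ∫ s in (0:ℝ)..τ, g s := by
      rw [← intervalIntegral.integral_add_adjacent_intervals
        (hgi 0 (1/4) le_rfl (by norm_num) (by norm_num)) (hgi (1/4) τ (by norm_num) hτ.1 h1),
        ← intervalIntegral.integral_const_mul]
      have hfirst : 0 ≤ ∫ s in (0:ℝ)..(1/4), g s :=
        intervalIntegral.integral_nonneg (by norm_num) fun s hs =>
          hg0 s ⟨hs.1, hs.2.trans (by norm_num)⟩
      have hsecond : ∫ s in (1/4:ℝ)..τ, A * w s ≤ ∫ s in (1/4:ℝ)..τ, g s := by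
        refine intervalIntegral.integral_mono_on hτ.1
          ((continuous_const.mul hwc).intervalIntegrable _ _)
          (hgi (1/4) τ (by norm_num) hτ.1 h1) fun s hs => ?_
        have hs' : s ∈ Icc (1/4:ℝ) (3/4) := ⟨hs.1, hs.2.trans hτ.2⟩
        have hAf : A ≤ f s (v s) := (mul_le_mul_of_nonneg_left
          (Real.rpow_le_rpow (by positivity) (hvK s hs') hm.le) hη.le).trans (hlow s hs')
        rw [mul_comm]
        exact mul_le_mul_of_nonneg_left hAf (hw0 s (le_trans (by norm_num) hs.1))
      linarith
    have hq : 0 ≤ (k:ℝ) / τ ^ (N - k) := by positivity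
    simp only [hL, hH]
    rw [← Real.mul_rpow hA0 (mul_nonneg hq hW0), mul_left_comm]
    exact Real.rpow_le_rpow (mul_nonneg hq (mul_nonneg hA0 hW0))
      (mul_le_mul_of_nonneg_left hin hq) (by positivity)
  have hHi1 : IntervalIntegrable H volume (1/4) (3/4) :=
    (hHc.mono (Icc_subset_Icc_right (by norm_num))).intervalIntegrable_of_Icc (by norm_num)
  have hHi2 : IntervalIntegrable H volume (3/4) 1 :=
    (hHc.mono (Icc_subset_Icc_left (by norm_num))).intervalIntegrable_of_Icc (by norm_num)
  have hT : Thess N k f v (1/4) = (∫ τ in (1/4:ℝ)..(3/4), H τ) + ∫ τ in (3/4:ℝ)..1, H τ :=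
    (intervalIntegral.integral_add_adjacent_intervals hHi1 hHi2).symm
  have htail : 0 ≤ ∫ τ in (3/4:ℝ)..1, H τ :=
    intervalIntegral.integral_nonneg (by norm_num) fun τ hτ =>
      hH0 τ ⟨le_trans (by norm_num) hτ.1, hτ.2⟩
  have hmain : A ^ ((1:ℝ) / k) * Gam N k ≤ ∫ τ in (1/4:ℝ)..(3/4), H τ := by
    change A ^ ((1:ℝ) / k) * (∫ τ in (1/4:ℝ)..(3/4), L τ) ≤ _
    rw [← intervalIntegral.integral_const_mul]
    exact intervalIntegral.integral_mono_on (by norm_num)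
      ((hLc.intervalIntegrable_of_Icc (by norm_num)).const_mul _) hHi1 hcmp
  have hrw : Gam N k * η ^ ((1:ℝ) / (k : ℝ)) * (1/4 : ℝ) ^ (m / (k : ℝ)) * S ^ (m / (k : ℝ))
      = A ^ ((1:ℝ) / k) * Gam N k := by
    rw [hAk]; ring
  rw [hrw, hT]
  linarith
end

section
/- Let ε > 0 and d > 0 be constants, let k be an integer with 1 ≤ k ≤ N, let f : [0,1] × [0,∞) → [0,∞) be continuous, and let v ∈ K. If f(t, v(t)) ≤ ε·v(t)^d for all t ∈ [0,1], then for every t ∈ [0,1] one has T_{k,f}(v)(t) ≤ (1/2)·(k/(N·C(N−1,k−1)))^{1/k} · (ε·‖v‖^d)^{1/k}; in particular, since (1/2)·(k/(N·C(N−1,k−1)))^{1/k} < 1, one has T_{k,f}(v)(t) ≤ (ε·‖v‖^d)^{1/k} for all t ∈ [0,1]. -/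
/-!
Write `M = ε ‖v‖ ^ d`. Since `0 ≤ v ≤ ‖v‖` on `[0,1]`, the growth hypothesis gives
`0 ≤ f(s, v s) ≤ M` there, so the inner integral at `τ ∈ (0,1]` is at most `M τ ^ N / (N C)` with
`C = (N-1).choose (k-1)`. After multiplication by `k / τ ^ (N-k)` the powers of `τ` combine to
`τ ^ k`, whose `k`-th root is `τ`. The outer integrand is therefore at most
`(k / (N C)) ^ (1/k) * M ^ (1/k) * τ`, and `∫_t^1 τ dτ ≤ 1/2`. Both comparisons of integrals bound a
nonnegative function by an integrable one, so integrability of the smaller function is never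
required.
-/

open Set Filter MeasureTheory

lemma le_supNorm {v : ℝ → ℝ} (hv : ContinuousOn v (Icc (0:ℝ) 1)) {t : ℝ}
    (ht : t ∈ Icc (0:ℝ) 1) : v t ≤ supNorm v :=
  (le_abs_self _).trans
    (le_csSup (isCompact_Icc.image_of_continuousOn hv.abs).bddAbove (mem_image_of_mem _ ht))

/-- Comparison of interval integrals that asks for integrability of the majorant only. -/
lemma intervalIntegral_le_of_nonneg {a b : ℝ} (hab : a ≤ b) {g h : ℝ → ℝ}
    (hg : ∀ x ∈ Ioc a b, 0 ≤ g x) (hh : Continuous h) (hgh : ∀ x ∈ Ioc a b, g x ≤ h x) :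
    ∫ x in a..b, g x ≤ ∫ x in a..b, h x := by
  rw [intervalIntegral.integral_of_le hab, intervalIntegral.integral_of_le hab]
  refine integral_mono_of_nonneg ?_ ((hh.intervalIntegrable a b).1) ?_
  · exact (ae_restrict_iff' measurableSet_Ioc).2 (Eventually.of_forall hg)
  · exact (ae_restrict_iff' measurableSet_Ioc).2 (Eventually.of_forall hgh)

/-- The bound for the outer integrand of `Thess`, for a weight `g` with values in `[0, M]`. -/
lemma integrand_bounds {N k : ℕ} (hk1 : 1 ≤ k) (hkN : k ≤ N) {g : ℝ → ℝ} {M C : ℝ}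
    (hC : 0 < C) (hg0 : ∀ s ∈ Icc (0:ℝ) 1, 0 ≤ g s) (hgM : ∀ s ∈ Icc (0:ℝ) 1, g s ≤ M)
    {τ : ℝ} (hτ : τ ∈ Ioc (0:ℝ) 1) :
    0 ≤ (((k : ℝ) / τ ^ (N - k)) * ∫ s in (0:ℝ)..τ, s ^ (N - 1) / C * g s) ^ ((1 : ℝ) / (k : ℝ)) ∧
    (((k : ℝ) / τ ^ (N - k)) * ∫ s in (0:ℝ)..τ, s ^ (N - 1) / C * g s) ^ ((1 : ℝ) / (k : ℝ)) ≤
      ((k : ℝ) / (N * C)) ^ ((1 : ℝ) / (k : ℝ)) * M ^ ((1 : ℝ) / (k : ℝ)) * τ := by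
  obtain ⟨hτ0, hτ1⟩ := hτ
  have hmem : ∀ s ∈ Ioc 0 τ, s ∈ Icc (0:ℝ) 1 := fun s hs => ⟨hs.1.le, hs.2.trans hτ1⟩
  have hM : 0 ≤ M := (hg0 0 (by simp)).trans (hgM 0 (by simp))
  have hN : (0:ℝ) < N := by exact_mod_cast (by omega : 0 < N)
  have hnn : ∀ s ∈ Ioc 0 τ, 0 ≤ s ^ (N - 1) / C * g s := fun s hs =>
    mul_nonneg (div_nonneg (pow_nonneg hs.1.le _) hC.le) (hg0 s (hmem s hs))
  have hI0 : 0 ≤ ∫ s in (0:ℝ)..τ, s ^ (N - 1) / C * g s := by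
    rw [intervalIntegral.integral_of_le hτ0.le]
    exact setIntegral_nonneg measurableSet_Ioc hnn
  have hI : ∫ s in (0:ℝ)..τ, s ^ (N - 1) / C * g s ≤ τ ^ N / N / C * M := by
    calc _ ≤ ∫ s in (0:ℝ)..τ, s ^ (N - 1) / C * M :=
          intervalIntegral_le_of_nonneg hτ0.le hnn (by fun_prop) fun s hs =>
            mul_le_mul_of_nonneg_left (hgM s (hmem s hs)) (div_nonneg (pow_nonneg hs.1.le _) hC.le)
      _ = τ ^ N / N / C * M := by
          obtain ⟨n, rfl⟩ : ∃ n, N = n + 1 := ⟨N - 1, by omega⟩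
          simp [intervalIntegral.integral_mul_const, intervalIntegral.integral_div, integral_pow]
  have hq : 0 ≤ (k : ℝ) / τ ^ (N - k) := by positivity
  refine ⟨Real.rpow_nonneg (mul_nonneg hq hI0) _, ?_⟩
  have hbase : (k : ℝ) / τ ^ (N - k) * ∫ s in (0:ℝ)..τ, s ^ (N - 1) / C * g s ≤
      (k : ℝ) / (N * C) * M * τ ^ k := by
    refine (mul_le_mul_of_nonneg_left hI hq).trans_eq ?_
    have hpow : τ ^ N = τ ^ (N - k) * τ ^ k := by rw [← pow_add, Nat.sub_add_cancel hkN]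
    rw [hpow]
    field_simp
  refine (Real.rpow_le_rpow (mul_nonneg hq hI0) hbase (by positivity)).trans_eq ?_
  rw [Real.mul_rpow (by positivity) (by positivity), Real.mul_rpow (by positivity) hM, one_div,
    Real.pow_rpow_inv_natCast hτ0.le (by omega)]

/-- Lemma 3.2 upper bound. -/
theorem stmt_1 (N k : ℕ) (hN : 2 ≤ N) (hk1 : 1 ≤ k) (hkN : k ≤ N)
    (f : ℝ → ℝ → ℝ)
    (hfc : ContinuousOn (fun p : ℝ × ℝ => f p.1 p.2) (Icc (0:ℝ) 1 ×ˢ Ici (0:ℝ)))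
    (hfnn : ∀ t ∈ Icc (0:ℝ) 1, ∀ c ∈ Ici (0:ℝ), 0 ≤ f t c)
    (ε d : ℝ) (hε : 0 < ε) (hd : 0 < d)
    (v : ℝ → ℝ) (hv : inK v)
    (hup : ∀ t ∈ Icc (0:ℝ) 1, f t (v t) ≤ ε * v t ^ d) :
    (∀ t ∈ Icc (0:ℝ) 1,
        Thess N k f v t ≤ (1/2 : ℝ) * ((k : ℝ) / ((N : ℝ) * ((N - 1).choose (k - 1)))) ^ ((1:ℝ) / (k : ℝ)) *
          (ε * supNorm v ^ d) ^ ((1:ℝ) / (k : ℝ))) ∧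
    (1/2 : ℝ) * ((k : ℝ) / ((N : ℝ) * ((N - 1).choose (k - 1)))) ^ ((1:ℝ) / (k : ℝ)) < 1 ∧
    ∀ t ∈ Icc (0:ℝ) 1, Thess N k f v t ≤ (ε * supNorm v ^ d) ^ ((1:ℝ) / (k : ℝ)) := by
  obtain ⟨hvc, hv0, -⟩ := hv
  set C : ℝ := (((N - 1).choose (k - 1) : ℕ) : ℝ) with hCdef
  have hC1 : (1:ℝ) ≤ C := by
    rw [hCdef]
    exact_mod_cast Nat.choose_pos (show k - 1 ≤ N - 1 by omega)
  have hC : 0 < C := by linarith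
  set M : ℝ := ε * supNorm v ^ d with hMdef
  have hg0 : ∀ s ∈ Icc (0:ℝ) 1, 0 ≤ f s (v s) := fun s hs => hfnn s hs _ (hv0 s hs)
  have hgM : ∀ s ∈ Icc (0:ℝ) 1, f s (v s) ≤ M := fun s hs =>
    (hup s hs).trans (mul_le_mul_of_nonneg_left
      (Real.rpow_le_rpow (hv0 s hs) (le_supNorm hvc hs) hd.le) hε.le)
  have hM : 0 ≤ M := (hg0 0 (by simp)).trans (hgM 0 (by simp))
  set A : ℝ := ((k : ℝ) / (N * C)) ^ ((1:ℝ) / (k : ℝ)) with hA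
  have hA0 : 0 ≤ A := by positivity
  have hB0 : 0 ≤ M ^ ((1:ℝ) / (k : ℝ)) := by positivity
  have hmain : ∀ t ∈ Icc (0:ℝ) 1, Thess N k f v t ≤ 1 / 2 * A * M ^ ((1:ℝ) / (k : ℝ)) := by
    intro t ht
    have hmem : ∀ τ ∈ Ioc t 1, τ ∈ Ioc (0:ℝ) 1 := fun τ hτ => ⟨ht.1.trans_lt hτ.1, hτ.2⟩
    calc Thess N k f v t ≤ ∫ τ in t..1, A * M ^ ((1:ℝ) / (k : ℝ)) * τ :=
          intervalIntegral_le_of_nonneg ht.2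
            (fun τ hτ => (integrand_bounds hk1 hkN hC hg0 hgM (hmem τ hτ)).1) (by fun_prop)
            (fun τ hτ => (integrand_bounds hk1 hkN hC hg0 hgM (hmem τ hτ)).2)
      _ = A * M ^ ((1:ℝ) / (k : ℝ)) * ((1 - t ^ 2) / 2) := by
          rw [intervalIntegral.integral_const_mul, integral_id, one_pow]
      _ ≤ A * M ^ ((1:ℝ) / (k : ℝ)) * (1 / 2) :=
          mul_le_mul_of_nonneg_left (by nlinarith [sq_nonneg t]) (mul_nonneg hA0 hB0)
      _ = 1 / 2 * A * M ^ ((1:ℝ) / (k : ℝ)) := by ring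
  have hA1 : A ≤ 1 := by
    have hkN' : (k : ℝ) ≤ N := by exact_mod_cast hkN
    have hN0 : (0:ℝ) < N := by exact_mod_cast (by omega : 0 < N)
    refine Real.rpow_le_one (by positivity) ?_ (by positivity)
    rw [div_le_one (by positivity)]
    nlinarith
  refine ⟨hmain, by linarith, fun t ht => (hmain t ht).trans ?_⟩
  exact mul_le_of_le_one_left hB0 (by linarith)
end

section
/- Let k be an integer with 1 ≤ k ≤ N and let f : [0,1] × [0,∞) → [0,∞) be continuous. Then the operator T_{k,f} : K → C([0,1]) is completely continuous: it is continuous on K (with respect to the supremum norm), and the image under T_{k,f} of every bounded subset of K is relatively compact in C([0,1]). -/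
/-!
Write `Thess N k f v t = ∫ τ in t..1, (hessInner N k φ τ) ^ (1/k)` with `φ s = f s (v s)`. The
operator `hessInner` is linear in `φ`, and the singularity of its prefactor `k / τ ^ (N - k)` is
harmless: `|φ| ≤ B` on `[0,1]` bounds the inner integral by `τ ^ N * B ≤ τ ^ (N - k) * B`, whence
`|hessInner N k φ| ≤ k * B` on `[0,1]` (`abs_hessInner_le`).

*Continuity.* For `w` uniformly close to `v`, uniform continuity of `f` on a compact rectangle makes
`f s (w s)` uniformly close to `f s (v s)`. By linearity of `hessInner` and the `1/k`-Hölder estimate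
`|a ^ p - b ^ p| ≤ |a - b| ^ p` (`abs_rpow_sub_rpow_le`), the integrands are then uniformly close.

*Compactness.* On a bounded subset of `K`, `f s (v s)` is bounded by a common constant `B`, so the
functions `Thess N k f v` are all bounded by `(k * B) ^ (1/k)` and Lipschitz with that constant;
the Arzelà–Ascoli theorem applies.
-/

open Set Filter MeasureTheory

lemma abs_le_supNorm {v : ℝ → ℝ} (hv : ContinuousOn v (Icc (0:ℝ) 1)) {t : ℝ}
    (ht : t ∈ Icc (0:ℝ) 1) : |v t| ≤ supNorm v :=
  le_csSup (isCompact_Icc.image_of_continuousOn hv.abs).bddAbove ⟨t, ht, rfl⟩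

lemma supNorm_le {v : ℝ → ℝ} {c : ℝ} (h : ∀ t ∈ Icc (0:ℝ) 1, |v t| ≤ c) : supNorm v ≤ c := by
  refine csSup_le ⟨_, 0, by simp, rfl⟩ ?_
  rintro _ ⟨t, ht, rfl⟩
  exact h t ht

lemma abs_rpow_sub_rpow_le {a b p : ℝ} (ha : 0 ≤ a) (hb : 0 ≤ b) (hp : 0 ≤ p) (hp1 : p ≤ 1) :
    |a ^ p - b ^ p| ≤ |a - b| ^ p := by
  wlog hab : b ≤ a generalizing a b
  · rw [abs_sub_comm, abs_sub_comm a b]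
    exact this hb ha (le_of_not_ge hab)
  rw [abs_of_nonneg (sub_nonneg.2 hab),
    abs_of_nonneg (sub_nonneg.2 (Real.rpow_le_rpow hb hab hp))]
  have := Real.rpow_add_le_add_rpow (sub_nonneg.2 hab) hb hp hp1
  rw [sub_add_cancel] at this
  linarith

/-- The base of the `1/k`-th power in `Thess`, as a linear operator in `φ s = f s (v s)`. -/
noncomputable def hessInner (N k : ℕ) (φ : ℝ → ℝ) (τ : ℝ) : ℝ :=
  ((k : ℝ) / τ ^ (N - k)) * ∫ s in (0:ℝ)..τ, s ^ (N - 1) / ((N - 1).choose (k - 1)) * φ s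

lemma continuousOn_weight_mul (N k : ℕ) {φ : ℝ → ℝ} (hφ : ContinuousOn φ (Icc (0:ℝ) 1)) :
    ContinuousOn (fun s : ℝ => s ^ (N - 1) / ((N - 1).choose (k - 1)) * φ s) (Icc (0:ℝ) 1) := by
  refine ContinuousOn.mul ?_ hφ
  exact (Continuous.div_const (by fun_prop) _).continuousOn

lemma intervalIntegrable_weight_mul (N k : ℕ) {φ : ℝ → ℝ} (hφ : ContinuousOn φ (Icc (0:ℝ) 1))
    {τ : ℝ} (hτ : τ ∈ Icc (0:ℝ) 1) :
    IntervalIntegrable (fun s : ℝ => s ^ (N - 1) / ((N - 1).choose (k - 1)) * φ s)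
      volume 0 τ := by
  refine ((continuousOn_weight_mul N k hφ).mono ?_).intervalIntegrable
  rw [uIcc_of_le hτ.1]
  exact Icc_subset_Icc_right hτ.2

lemma hessInner_sub (N k : ℕ) {φ ψ : ℝ → ℝ} (hφ : ContinuousOn φ (Icc (0:ℝ) 1))
    (hψ : ContinuousOn ψ (Icc (0:ℝ) 1)) {τ : ℝ} (hτ : τ ∈ Icc (0:ℝ) 1) :
    hessInner N k φ τ - hessInner N k ψ τ = hessInner N k (fun s => φ s - ψ s) τ := by
  unfold hessInner
  rw [← mul_sub, ← intervalIntegral.integral_sub (intervalIntegrable_weight_mul N k hφ hτ)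
    (intervalIntegrable_weight_mul N k hψ hτ)]
  simp only [mul_sub]

lemma hessInner_nonneg (N k : ℕ) {φ : ℝ → ℝ} (hφ : ∀ s ∈ Icc (0:ℝ) 1, 0 ≤ φ s) {τ : ℝ}
    (hτ : τ ∈ Icc (0:ℝ) 1) : 0 ≤ hessInner N k φ τ := by
  have h0 := hτ.1
  refine mul_nonneg (by positivity) (intervalIntegral.integral_nonneg h0 fun s hs => ?_)
  have h1 := hs.1
  have h2 := hφ s ⟨hs.1, hs.2.trans hτ.2⟩
  positivity

/-- The integral over `[0, τ]` is at most `τ ^ N * B ≤ τ ^ (N - k) * B`, which cancels the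
singularity of the prefactor at `τ = 0`. -/
lemma abs_hessInner_le {N k : ℕ} (hk1 : 1 ≤ k) (hkN : k ≤ N) {φ : ℝ → ℝ} {B : ℝ}
    (hφ : ∀ s ∈ Icc (0:ℝ) 1, |φ s| ≤ B) {τ : ℝ} (hτ : τ ∈ Icc (0:ℝ) 1) :
    |hessInner N k φ τ| ≤ k * B := by
  have hB : 0 ≤ B := (abs_nonneg _).trans (hφ 0 (by simp))
  rcases hτ.1.eq_or_lt with rfl | h0
  · simp only [hessInner, intervalIntegral.integral_same, mul_zero, abs_zero]
    positivity
  have hC : (1:ℝ) ≤ ((N - 1).choose (k - 1) : ℕ) := by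
    exact_mod_cast Nat.choose_pos (show k - 1 ≤ N - 1 by omega)
  have hint : |∫ s in (0:ℝ)..τ, s ^ (N - 1) / ((N - 1).choose (k - 1)) * φ s|
      ≤ τ ^ (N - 1) * B * |τ - 0| := by
    rw [← Real.norm_eq_abs]
    refine intervalIntegral.norm_integral_le_of_norm_le_const fun s hs => ?_
    rw [uIoc_of_le hτ.1] at hs
    have hs0 : 0 ≤ s := hs.1.le
    rw [Real.norm_eq_abs, abs_mul, abs_of_nonneg (by positivity)]
    refine mul_le_mul ?_ (hφ s ⟨hs0, hs.2.trans hτ.2⟩) (abs_nonneg _) (by positivity)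
    exact (div_le_self (by positivity) hC).trans (pow_le_pow_left₀ hs0 hs.2 _)
  have hpow : τ ^ (N - 1) * B * |τ - 0| ≤ τ ^ (N - k) * B := by
    rw [sub_zero, abs_of_pos h0, mul_right_comm, ← pow_succ]
    exact mul_le_mul_of_nonneg_right (pow_le_pow_of_le_one hτ.1 hτ.2 (by omega)) hB
  have hpos : 0 < τ ^ (N - k) := by positivity
  rw [hessInner, abs_mul, abs_of_nonneg (by positivity)]
  calc (k : ℝ) / τ ^ (N - k) * |∫ s in (0:ℝ)..τ, s ^ (N - 1) / ((N - 1).choose (k - 1)) * φ s|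
      ≤ (k : ℝ) / τ ^ (N - k) * (τ ^ (N - k) * B) := by gcongr; exact hint.trans hpow
    _ = k * B := by field_simp

lemma continuousOn_hessInner (N k : ℕ) {φ : ℝ → ℝ} (hφ : ContinuousOn φ (Icc (0:ℝ) 1)) :
    ContinuousOn (hessInner N k φ) (Ioc (0:ℝ) 1) := by
  refine ContinuousOn.mul ?_ ?_
  · exact continuousOn_const.div (by fun_prop) fun τ hτ => (pow_pos hτ.1 _).ne'
  · refine ContinuousOn.mono (intervalIntegral.continuousOn_primitive_interval
      (a := 0) (b := 1) ?_) (Ioc_subset_Icc_self.trans (uIcc_of_le zero_le_one).ge)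
    rw [uIcc_of_le zero_le_one]
    exact (continuousOn_weight_mul N k hφ).integrableOn_Icc

lemma hessInner_rpow_le {N k : ℕ} (hk1 : 1 ≤ k) (hkN : k ≤ N) {φ : ℝ → ℝ} {B : ℝ}
    (h0 : ∀ s ∈ Icc (0:ℝ) 1, 0 ≤ φ s)
    (hφ : ∀ s ∈ Icc (0:ℝ) 1, |φ s| ≤ B) {τ : ℝ} (hτ : τ ∈ Icc (0:ℝ) 1) :
    ‖hessInner N k φ τ ^ ((1:ℝ) / k)‖ ≤ (k * B) ^ ((1:ℝ) / k) := by
  have h := hessInner_nonneg N k h0 hτ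
  rw [Real.norm_eq_abs, abs_of_nonneg (Real.rpow_nonneg h _)]
  exact Real.rpow_le_rpow h ((le_abs_self _).trans (abs_hessInner_le hk1 hkN hφ hτ)) (by positivity)

/-- The integrand of `Thess` is continuous on `(0,1]` and bounded, hence integrable. -/
lemma intervalIntegrable_hessInner_rpow {N k : ℕ} (hk1 : 1 ≤ k) (hkN : k ≤ N) {φ : ℝ → ℝ}
    (hφ : ContinuousOn φ (Icc (0:ℝ) 1)) (h0 : ∀ s ∈ Icc (0:ℝ) 1, 0 ≤ φ s)
    {a b : ℝ} (ha : a ∈ Icc (0:ℝ) 1) (hb : b ∈ Icc (0:ℝ) 1) :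
    IntervalIntegrable (fun τ => hessInner N k φ τ ^ ((1:ℝ) / k)) volume a b := by
  have key : IntegrableOn (fun τ => hessInner N k φ τ ^ ((1:ℝ) / k)) (Ioc (0:ℝ) 1) := by
    refine IntegrableOn.of_bound (by simp) ?_ ((k * supNorm φ) ^ ((1:ℝ) / k)) ?_
    · refine ContinuousOn.aestronglyMeasurable ?_ measurableSet_Ioc
      exact (continuousOn_hessInner N k hφ).rpow_const fun _ _ => Or.inr (by positivity)
    · refine (ae_restrict_iff' measurableSet_Ioc).2 (Eventually.of_forall fun τ hτ => ?_)
      exact hessInner_rpow_le hk1 hkN h0 (fun s hs => abs_le_supNorm hφ hs)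
        (Ioc_subset_Icc_self hτ)
  rw [intervalIntegrable_iff]
  refine key.mono_set ?_
  exact Ioc_subset_Ioc (le_min ha.1 hb.1) (max_le ha.2 hb.2)

lemma Thess_eq (N k : ℕ) (f : ℝ → ℝ → ℝ) (v : ℝ → ℝ) (t : ℝ) :
    Thess N k f v t = ∫ τ in t..1, hessInner N k (fun s => f s (v s)) τ ^ ((1:ℝ) / k) := rfl

lemma uIoc_subset_unit {a b : ℝ} (ha : a ∈ Icc (0:ℝ) 1) (hb : b ∈ Icc (0:ℝ) 1) :
    uIoc a b ⊆ Icc (0:ℝ) 1 := fun _ hx =>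
  ⟨(le_min ha.1 hb.1).trans hx.1.le, hx.2.trans (max_le ha.2 hb.2)⟩

lemma abs_Thess_sub_le {N k : ℕ} (hk1 : 1 ≤ k) (hkN : k ≤ N) {f : ℝ → ℝ → ℝ} {v : ℝ → ℝ} {B : ℝ}
    (hφ : ContinuousOn (fun s => f s (v s)) (Icc (0:ℝ) 1))
    (h0 : ∀ s ∈ Icc (0:ℝ) 1, 0 ≤ f s (v s)) (hB : ∀ s ∈ Icc (0:ℝ) 1, |f s (v s)| ≤ B)
    {a b : ℝ} (ha : a ∈ Icc (0:ℝ) 1) (hb : b ∈ Icc (0:ℝ) 1) :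
    |Thess N k f v a - Thess N k f v b| ≤ (k * B) ^ ((1:ℝ) / k) * |a - b| := by
  have h1 : (1:ℝ) ∈ Icc (0:ℝ) 1 := by simp
  rw [Thess_eq, Thess_eq, ← intervalIntegral.integral_add_adjacent_intervals
    (intervalIntegrable_hessInner_rpow hk1 hkN hφ h0 ha hb)
    (intervalIntegrable_hessInner_rpow hk1 hkN hφ h0 hb h1), add_sub_cancel_right,
    abs_sub_comm a b]
  exact intervalIntegral.norm_integral_le_of_norm_le_const fun τ hτ =>
    hessInner_rpow_le hk1 hkN h0 hB (uIoc_subset_unit ha hb hτ)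

/-- `Thess` is `1/k`-Hölder in the sup norm of `s ↦ f s (v s)`. -/
lemma abs_Thess_sub_Thess_le {N k : ℕ} (hk1 : 1 ≤ k) (hkN : k ≤ N) {f : ℝ → ℝ → ℝ}
    {v w : ℝ → ℝ} {η : ℝ}
    (hv : ContinuousOn (fun s => f s (v s)) (Icc (0:ℝ) 1))
    (hv0 : ∀ s ∈ Icc (0:ℝ) 1, 0 ≤ f s (v s))
    (hw : ContinuousOn (fun s => f s (w s)) (Icc (0:ℝ) 1))
    (hw0 : ∀ s ∈ Icc (0:ℝ) 1, 0 ≤ f s (w s))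
    (hη : ∀ s ∈ Icc (0:ℝ) 1, |f s (w s) - f s (v s)| ≤ η)
    {t : ℝ} (ht : t ∈ Icc (0:ℝ) 1) :
    |Thess N k f w t - Thess N k f v t| ≤ (k * η) ^ ((1:ℝ) / k) := by
  have h1 : (1:ℝ) ∈ Icc (0:ℝ) 1 := by simp
  have hη0 : 0 ≤ η := (abs_nonneg _).trans (hη 0 (by simp))
  have hk : (1:ℝ) ≤ k := by exact_mod_cast hk1
  rw [Thess_eq, Thess_eq, ← intervalIntegral.integral_sub
    (intervalIntegrable_hessInner_rpow hk1 hkN hw hw0 ht h1)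
    (intervalIntegrable_hessInner_rpow hk1 hkN hv hv0 ht h1)]
  have : |∫ τ in t..1, (hessInner N k (fun s => f s (w s)) τ ^ ((1:ℝ) / k)
      - hessInner N k (fun s => f s (v s)) τ ^ ((1:ℝ) / k))|
      ≤ (k * η) ^ ((1:ℝ) / k) * |1 - t| := by
    rw [← Real.norm_eq_abs]
    refine intervalIntegral.norm_integral_le_of_norm_le_const fun τ hτ => ?_
    have hτ' := uIoc_subset_unit ht h1 hτ
    refine (abs_rpow_sub_rpow_le (hessInner_nonneg N k hw0 hτ') (hessInner_nonneg N k hv0 hτ')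
      (by positivity) (div_le_one_of_le₀ hk (by positivity))).trans ?_
    rw [hessInner_sub N k hw hv hτ']
    exact Real.rpow_le_rpow (abs_nonneg _) (abs_hessInner_le hk1 hkN hη hτ') (by positivity)
  refine this.trans (mul_le_of_le_one_right (by positivity) ?_)
  rw [abs_of_nonneg (by linarith [ht.2])]
  linarith [ht.1]

/-- Arzelà–Ascoli on `[0,1]` for functions on `ℝ`, restricted to `[0,1]`. -/
lemma exists_subseq_tendstoUniformlyOn {F : ℕ → ℝ → ℝ} {L : ℝ}
    (hb : ∀ j, ∀ t ∈ Icc (0:ℝ) 1, |F j t| ≤ L)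
    (hL : ∀ j, ∀ a ∈ Icc (0:ℝ) 1, ∀ b ∈ Icc (0:ℝ) 1, |F j a - F j b| ≤ L * |a - b|) :
    ∃ φ : ℕ → ℕ, StrictMono φ ∧ ∃ u : ℝ → ℝ, ContinuousOn u (Icc (0:ℝ) 1) ∧
      TendstoUniformlyOn (fun j t => F (φ j) t) u atTop (Icc (0:ℝ) 1) := by
  have hL0 : 0 ≤ L := (abs_nonneg _).trans (hb 0 0 (by simp))
  have hlip : ∀ j, LipschitzWith L.toNNReal (fun t : Icc (0:ℝ) 1 => F j t) := fun j =>
    LipschitzWith.of_dist_le_mul fun a b => by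
      rw [Real.coe_toNNReal _ hL0]
      exact hL j a a.2 b b.2
  let G : ℕ → BoundedContinuousFunction (Icc (0:ℝ) 1) ℝ := fun j =>
    BoundedContinuousFunction.mkOfCompact ⟨fun t => F j t, (hlip j).continuous⟩
  have hcomp : IsCompact (closure (range G)) := by
    refine BoundedContinuousFunction.arzela_ascoli (Icc (-L) L) isCompact_Icc _ ?_ ?_
    · rintro g x ⟨j, rfl⟩
      exact abs_le.1 (hb j x x.2)
    · refine LipschitzWith.uniformEquicontinuous _ L.toNNReal ?_ |>.equicontinuous
      rintro ⟨_, j, rfl⟩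
      exact hlip j
  obtain ⟨g, -, φ, hφ, hg⟩ := hcomp.tendsto_subseq (x := G) fun j => subset_closure ⟨j, rfl⟩
  refine ⟨φ, hφ, IccExtend (zero_le_one' ℝ) g, (g.continuous.Icc_extend').continuousOn, ?_⟩
  rw [tendstoUniformlyOn_iff_tendstoUniformly_comp_coe]
  have := BoundedContinuousFunction.tendsto_iff_tendstoUniformly.1 hg
  have hu : IccExtend (zero_le_one' ℝ) g ∘ Subtype.val = g :=
    funext fun x => IccExtend_val _ _ x
  rw [hu]
  exact this

/-- the operator `T_{k,f} : K → C([0,1])` is completely continuous: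
it is continuous on `K` for the supremum norm, and images of bounded subsets of `K`
are relatively compact in `C([0,1])` (sequential formulation). -/
theorem stmt_2 (N k : ℕ) (hN : 2 ≤ N) (hk1 : 1 ≤ k) (hkN : k ≤ N)
    (f : ℝ → ℝ → ℝ)
    (hfc : ContinuousOn (fun p : ℝ × ℝ => f p.1 p.2) (Icc (0:ℝ) 1 ×ˢ Ici (0:ℝ)))
    (hfnn : ∀ t ∈ Icc (0:ℝ) 1, ∀ c ∈ Ici (0:ℝ), 0 ≤ f t c) :
    (∀ v : ℝ → ℝ, inK v → ∀ ε > (0:ℝ), ∃ δ > (0:ℝ), ∀ w : ℝ → ℝ, inK w →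
        supNorm (fun t => w t - v t) < δ →
        supNorm (fun t => Thess N k f w t - Thess N k f v t) < ε) ∧
    ∀ M : ℝ, ∀ vs : ℕ → ℝ → ℝ, (∀ j, inK (vs j)) → (∀ j, supNorm (vs j) ≤ M) →
      ∃ φ : ℕ → ℕ, StrictMono φ ∧ ∃ u : ℝ → ℝ, ContinuousOn u (Icc (0:ℝ) 1) ∧
        TendstoUniformlyOn (fun j t => Thess N k f (vs (φ j)) t) u atTop (Icc (0:ℝ) 1) := by
  have hcomp : ∀ v, inK v → ContinuousOn (fun s => f s (v s)) (Icc (0:ℝ) 1) := fun v hv =>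
    hfc.comp (continuousOn_id.prodMk hv.1) fun s hs => ⟨hs, hv.2.1 s hs⟩
  have hnn : ∀ v, inK v → ∀ s ∈ Icc (0:ℝ) 1, 0 ≤ f s (v s) := fun v hv s hs =>
    hfnn s hs _ (hv.2.1 s hs)
  have hsub : ∀ R : ℝ, Icc (0:ℝ) 1 ×ˢ Icc (0:ℝ) R ⊆ Icc (0:ℝ) 1 ×ˢ Ici (0:ℝ) := fun R =>
    prod_mono_right Icc_subset_Ici_self
  have hcpt : ∀ R : ℝ, IsCompact (Icc (0:ℝ) 1 ×ˢ Icc (0:ℝ) R) := fun R =>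
    isCompact_Icc.prod isCompact_Icc
  constructor
  · intro v hv ε hε
    -- Any `w` within distance `1` of `v` takes its values in `[0, ‖v‖ + 1]`.
    have huc := (hcpt (supNorm v + 1)).uniformContinuousOn_of_continuous (hfc.mono (hsub _))
    rw [Metric.uniformContinuousOn_iff] at huc
    have hk : (0:ℝ) < k := by exact_mod_cast hk1
    -- This bound is chosen so that `(k * η) ^ (1 / k) = ε / 2`.
    obtain ⟨δ, hδ, H⟩ := huc ((ε / 2) ^ k / k) (by positivity)
    refine ⟨min δ 1, lt_min hδ one_pos, fun w hw hwv => ?_⟩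
    have hclose : ∀ s ∈ Icc (0:ℝ) 1, |w s - v s| < min δ 1 := fun s hs =>
      (abs_le_supNorm (v := fun t => w t - v t) (hw.1.sub hv.1) hs).trans_lt hwv
    have hη : ∀ s ∈ Icc (0:ℝ) 1, |f s (w s) - f s (v s)| ≤ (ε / 2) ^ k / k := by
      intro s hs
      have h1 := hclose s hs
      have h2 := (le_abs_self _).trans (abs_le_supNorm hv.1 hs)
      have h3 := (le_abs_self _).trans_lt (h1.trans_le (min_le_right _ _))
      refine (H (s, w s) ⟨hs, hw.2.1 s hs, by linarith⟩ (s, v s)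
        ⟨hs, hv.2.1 s hs, by linarith⟩ ?_).le
      rw [Prod.dist_eq, dist_self, Real.dist_eq]
      exact max_lt hδ (h1.trans_le (min_le_left _ _))
    refine (supNorm_le (c := ε / 2) fun t ht => ?_).trans_lt (by linarith)
    refine (abs_Thess_sub_Thess_le hk1 hkN (hcomp v hv) (hnn v hv) (hcomp w hw) (hnn w hw)
      hη ht).trans_eq ?_
    rw [mul_div_cancel₀ _ hk.ne', one_div]
    exact Real.pow_rpow_inv_natCast (by positivity) (by omega)
  · intro M vs hvs hM
    obtain ⟨B, hB⟩ := (hcpt M).exists_bound_of_continuousOn (hfc.mono (hsub M))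
    have hBj : ∀ j, ∀ s ∈ Icc (0:ℝ) 1, |f s (vs j s)| ≤ B := fun j s hs =>
      hB (s, vs j s) ⟨hs, (hvs j).2.1 s hs,
        (le_abs_self _).trans ((abs_le_supNorm (hvs j).1 hs).trans (hM j))⟩
    have hB0 : 0 ≤ B := (abs_nonneg _).trans (hBj 0 0 (by simp))
    have hlip : ∀ j, ∀ a ∈ Icc (0:ℝ) 1, ∀ b ∈ Icc (0:ℝ) 1,
        |Thess N k f (vs j) a - Thess N k f (vs j) b| ≤ (k * B) ^ ((1:ℝ) / k) * |a - b| :=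
      fun j a ha b hb => abs_Thess_sub_le hk1 hkN (hcomp _ (hvs j)) (hnn _ (hvs j)) (hBj j) ha hb
    refine exists_subseq_tendstoUniformlyOn (fun j t ht => ?_) hlip
    -- `Thess` vanishes at `1`, so the Lipschitz bound also gives the uniform bound.
    have h := hlip j t ht 1 (by simp)
    rw [Thess_eq N k f (vs j) 1, intervalIntegral.integral_same, sub_zero] at h
    refine h.trans (mul_le_of_le_one_right (by positivity) ?_)
    rw [abs_sub_comm, abs_of_nonneg (by linarith [ht.2])]
    linarith [ht.1]
end

section
/- (Theorem 1.4, nonexistence for the power-type system.) In the power-type case, if γ_1·γ_2·⋯·γ_n = k_1·k_2·⋯·k_n, then the only nonnegative continuous solution of the coupled integral system v_i = T_i(v_{i+1}) for i = 1,…,n (with v_{n+1} := v_1) on [0,1] is the trivial one: v_1 = v_2 = ⋯ = v_n ≡ 0. Equivalently, the power-type coupled radial k_i-Hessian system in the unit ball admits no nontrivial radial k-admissible solution. -/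
/-!
If `0 ≤ v ≤ M` on `[0,1]`, the inner integral defining `T_{k,f}(v)` with `f(s,c) = c^γ` is at most
`τ^N M^γ / (N C(N-1,k-1))`, and `k ≤ N ≤ N C(N-1,k-1)`; hence the outer integrand is at most
`τ M^{γ/k}` and `T_{k,f}(v) ≤ M^{γ/k} / 2` (`Thess_le`). For a solution of the system, the maxima
`M_i` of `v_i` therefore satisfy `M_i ≤ M_{i+1}^{q_i} / 2` with `q_i = γ_i / k_i`. Going once
around the cycle and using `∏ q_i = 1` gives `M_i ≤ M_i / 2`, so `M_i = 0` (`cyclic_zero`).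
-/


open Set Filter MeasureTheory

/-- The outer integrand of `T_{k,f}(v)`, `f(s,c) = c^γ`, is at most `τ M^{γ/k}` if `v ≤ M`. -/
lemma integrand_bound (N k : ℕ) (hk : 1 ≤ k) (hkN : k ≤ N) (γ : ℝ) (hγ : 0 < γ)
    (v : ℝ → ℝ) (M : ℝ) (hv0 : ∀ t ∈ Icc (0:ℝ) 1, 0 ≤ v t) (hvM : ∀ t ∈ Icc (0:ℝ) 1, v t ≤ M)
    (τ : ℝ) (h0 : 0 < τ) (h1 : τ ≤ 1) :
    ‖(((k : ℝ) / τ ^ (N - k)) *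
      ∫ s in (0:ℝ)..τ, s ^ (N - 1) / ((N - 1).choose (k - 1)) * (v s) ^ γ) ^ ((1 : ℝ) / (k : ℝ))‖
      ≤ τ * M ^ (γ / k) := by
  have hM : 0 ≤ M := (hv0 0 (by simp)).trans (hvM 0 (by simp))
  have hkpos : (0:ℝ) < k := by exact_mod_cast hk
  have hNpos : (0:ℝ) < N := by exact_mod_cast (by omega : 0 < N)
  have hkN' : (k:ℝ) ≤ N := by exact_mod_cast hkN
  have hC : (1:ℝ) ≤ (((N - 1).choose (k - 1) : ℕ) : ℝ) := by
    exact_mod_cast Nat.choose_pos (by omega : k - 1 ≤ N - 1)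
  set C : ℝ := (((N - 1).choose (k - 1) : ℕ) : ℝ) with hCdef
  have hCpos : 0 < C := by linarith
  have hI0 : 0 ≤ ∫ s in (0:ℝ)..τ, s ^ (N - 1) / C * (v s) ^ γ := by
    apply intervalIntegral.integral_nonneg h0.le
    intro s hs
    have := hv0 s ⟨hs.1, hs.2.trans h1⟩
    have := hs.1
    positivity
  have hI : (∫ s in (0:ℝ)..τ, s ^ (N - 1) / C * (v s) ^ γ) ≤ τ ^ N / (N * C) * M ^ γ := by
    have hg : (∫ s in (0:ℝ)..τ, s ^ (N - 1) / C * M ^ γ) = τ ^ N / (N * C) * M ^ γ := by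
      have hN1 : N - 1 + 1 = N := by omega
      have hN2 : ((N - 1 : ℕ) : ℝ) + 1 = N := by exact_mod_cast hN1
      rw [intervalIntegral.integral_mul_const, intervalIntegral.integral_div, integral_pow, hN1,
        hN2, zero_pow (by omega)]
      field_simp
      ring
    rw [← hg]
    refine (le_abs_self _).trans ?_
    rw [← Real.norm_eq_abs]
    apply intervalIntegral.norm_integral_le_of_norm_le h0.le
    · refine Eventually.of_forall fun s hs => ?_
      have h2 := hv0 s ⟨hs.1.le, hs.2.trans h1⟩
      have h3 := hvM s ⟨hs.1.le, hs.2.trans h1⟩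
      have h4 := hs.1.le
      rw [Real.norm_of_nonneg (by positivity)]
      gcongr
    · exact Continuous.intervalIntegrable (by fun_prop) _ _
  rw [Real.norm_of_nonneg (by positivity)]
  have hB : ((k : ℝ) / τ ^ (N - k)) * (∫ s in (0:ℝ)..τ, s ^ (N - 1) / C * (v s) ^ γ)
      ≤ τ ^ k * M ^ γ := by
    calc _ ≤ ((k : ℝ) / τ ^ (N - k)) * (τ ^ N / (N * C) * M ^ γ) := by gcongr
      _ = (k / (N * C)) * (τ ^ k * M ^ γ) := by
        have : τ ^ N = τ ^ (N - k) * τ ^ k := by rw [← pow_add]; congr 1; omega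
        rw [this]; field_simp
      _ ≤ 1 * (τ ^ k * M ^ γ) := by
        gcongr
        rw [div_le_one (by positivity)]
        nlinarith
      _ = _ := one_mul _
  calc _ ≤ (τ ^ k * M ^ γ) ^ ((1:ℝ) / k) := by gcongr
    _ = τ * M ^ (γ / k) := by
      rw [Real.mul_rpow (by positivity) (by positivity), ← Real.rpow_natCast, ← Real.rpow_mul h0.le,
        ← Real.rpow_mul hM]
      rw [mul_one_div_cancel hkpos.ne', Real.rpow_one, mul_one_div]

lemma Thess_le (N k : ℕ) (hk : 1 ≤ k) (hkN : k ≤ N) (γ : ℝ) (hγ : 0 < γ)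
    (v : ℝ → ℝ) (M : ℝ) (hv0 : ∀ t ∈ Icc (0:ℝ) 1, 0 ≤ v t) (hvM : ∀ t ∈ Icc (0:ℝ) 1, v t ≤ M)
    (t : ℝ) (ht : t ∈ Icc (0:ℝ) 1) :
    Thess N k (fun _ c => c ^ γ) v t ≤ 1 / 2 * M ^ (γ / k) := by
  have hM : 0 ≤ M := (hv0 0 (by simp)).trans (hvM 0 (by simp))
  have h : ‖Thess N k (fun _ c => c ^ γ) v t‖ ≤ ∫ τ in t..1, τ * M ^ (γ / k) := by
    apply intervalIntegral.norm_integral_le_of_norm_le ht.2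
    · exact Eventually.of_forall fun τ hτ =>
        integrand_bound N k hk hkN γ hγ v M hv0 hvM τ (ht.1.trans_lt hτ.1) hτ.2
    · exact Continuous.intervalIntegrable (by fun_prop) _ _
  rw [intervalIntegral.integral_mul_const, integral_id] at h
  refine (le_abs_self _).trans (h.trans ?_)
  gcongr
  nlinarith [sq_nonneg t]

/-- A cyclic chain of inequalities `M_i ≤ M_{i+1}^{q_i} / 2` with `∏ q_i = 1` forces `M = 0`. -/
lemma cyclic_zero (n : ℕ) [NeZero n] (q M : Fin n → ℝ) (hq : ∀ i, 0 ≤ q i)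
    (hprod : ∏ i, q i = 1) (hM : ∀ i, 0 ≤ M i)
    (h : ∀ i, M i ≤ 1 / 2 * M (i + 1) ^ q i) (i : Fin n) : M i = 0 := by
  have hstep : ∀ j : ℕ, i + Fin.ofNat n (j + 1) = i + Fin.ofNat n j + 1 := by
    intro j
    rw [add_assoc]
    congr 1
    apply Fin.ext
    simp [Fin.val_add, Fin.ofNat]
  -- The factor `1/2` is kept only from the first inequality; the others are used without it.
  have key : ∀ j : ℕ, M i ≤ 1 / 2 * M (i + Fin.ofNat n (j + 1)) ^
      (∏ l ∈ Finset.range (j + 1), q (i + Fin.ofNat n l)) := by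
    intro j
    induction j with
    | zero =>
      rw [hstep 0]
      simpa using h i
    | succ j ih =>
      refine ih.trans ?_
      rw [Finset.prod_range_succ _ (j + 1), hstep (j + 1)]
      set a := i + Fin.ofNat n (j + 1)
      have h1 : M a ≤ M (a + 1) ^ q a := by
        have := h a
        have := Real.rpow_nonneg (hM (a + 1)) (q a)
        linarith
      rw [mul_comm _ (q a), Real.rpow_mul (hM _)]
      have : 0 ≤ ∏ l ∈ Finset.range (j + 1), q (i + Fin.ofNat n l) :=
        Finset.prod_nonneg fun _ _ => hq _
      have := hM a
      gcongr
  have hn : n - 1 + 1 = n := Nat.sub_add_cancel (NeZero.one_le)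
  have hk := key (n - 1)
  rw [hn] at hk
  have hz : i + Fin.ofNat n n = i := by
    have : Fin.ofNat n n = 0 := by apply Fin.ext; simp [Fin.ofNat]
    rw [this, add_zero]
  have hp : ∏ l ∈ Finset.range n, q (i + Fin.ofNat n l) = 1 := by
    rw [Finset.prod_range, ← hprod, ← Equiv.prod_comp (Equiv.addLeft i) q]
    refine Finset.prod_congr rfl fun l _ => ?_
    simp
  rw [hz, hp, Real.rpow_one] at hk
  have := hM i
  linarith

/-- Theorem 1.4, nonexistence for the power-type system: if
`γ_1⋯γ_n = k_1⋯k_n`, the only nonnegative continuous solution of the coupled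
integral system `v_i = T_i(v_{i+1})` (indices mod `n`) on `[0,1]` is trivial. -/
theorem stmt_7 (N n : ℕ) [NeZero n] (hN : 2 ≤ N) (hn : 2 ≤ n)
    (k : Fin n → ℕ) (hk : ∀ i, 1 ≤ k i ∧ k i ≤ N)
    (γ : Fin n → ℝ) (hγ : ∀ i, 0 < γ i)
    (hγk : ∏ i, γ i = ∏ i, (k i : ℝ))
    (v : Fin n → ℝ → ℝ)
    (hvc : ∀ i, ContinuousOn (v i) (Icc (0:ℝ) 1))
    (hvnn : ∀ i, ∀ t ∈ Icc (0:ℝ) 1, 0 ≤ v i t)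
    (hfix : ∀ i : Fin n, ∀ t ∈ Icc (0:ℝ) 1,
        v i t = Thess N (k i) (fun _ c => c ^ γ i) (v (i + 1)) t) :
    ∀ i, ∀ t ∈ Icc (0:ℝ) 1, v i t = 0 := by
  have hmax : ∀ i, ∃ x ∈ Icc (0:ℝ) 1, ∀ t ∈ Icc (0:ℝ) 1, v i t ≤ v i x := fun i =>
    isCompact_Icc.exists_isMaxOn ⟨0, by simp⟩ (hvc i)
  choose x hx hxm using hmax
  have hkpos : ∀ i, (0:ℝ) < k i := fun i => by exact_mod_cast (hk i).1
  have hz := cyclic_zero n (fun i => γ i / k i) (fun i => v i (x i))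
    (fun i => (div_pos (hγ i) (hkpos i)).le)
    (by
      rw [Finset.prod_div_distrib, hγk]
      exact div_self (Finset.prod_pos fun i _ => hkpos i).ne')
    (fun i => hvnn i _ (hx i))
    (fun i => by
      show v i (x i) ≤ _
      rw [hfix i _ (hx i)]
      exact Thess_le N (k i) (hk i).1 (hk i).2 (γ i) (hγ i) _ _ (hvnn _) (hxm _) _ (hx i))
  exact fun i t ht => le_antisymm ((hxm i t ht).trans (hz i).le) (hvnn i t ht)
end

section
/- In the power-type case with γ_1·γ_2·⋯·γ_n = k_1·k_2·⋯·k_n, for every nonnegative continuous function v on [0,1] that is not identically zero one has the strict inequality ‖T(v)‖ < ‖v‖. -/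
/-!
The idea is an explicit contraction estimate for each factor. If `0 ≤ v ≤ M` on `[0,1]`, the inner
integral of `T_{k,f}` with `f(t,c) = c^γ` is at most `M^γ τ^N / (N C(N-1,k-1))`; multiplying by
`k/τ^{N-k}` and using `k ≤ N` and `C(N-1,k-1) ≥ 1` gives at most `M^γ τ^k`. Taking `k`-th roots and
integrating `τ` over `[t,1]` gives `0 ≤ T_{k,f}(v) ≤ M^{γ/k}/2` (`Thess_pow_bound`). Iterating
(`compT_pow_bound`), `T(v) ≤ c M^{∏ γ_i/k_i}` with some `0 < c ≤ 1/2`, and the exponent is `1`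
when `∏ γ_i = ∏ k_i`, so `‖T(v)‖ ≤ ‖v‖/2`.

No continuity or measurability of the intermediate functions is needed: the integral of a
non-integrable function is `0`, which is consistent with both the lower and the upper bounds.
-/

open Set Filter MeasureTheory

/-- The composite operator `T = T_1 ∘ T_2 ∘ ⋯ ∘ T_n`. -/
noncomputable def compT (N : ℕ) {n : ℕ} (k : Fin n → ℕ) (f : Fin n → ℝ → ℝ → ℝ) :
    (ℝ → ℝ) → (ℝ → ℝ) :=
  (List.ofFn fun i : Fin n => Thess N (k i) (f i)).foldr (· ∘ ·) id

theorem inner_bound (N k : ℕ) (hk1 : 1 ≤ k) (hkN : k ≤ N) (γ : ℝ) (hγ : 0 < γ) (v : ℝ → ℝ) (M : ℝ)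
    (hv : ∀ t ∈ Icc (0:ℝ) 1, 0 ≤ v t ∧ v t ≤ M) (τ : ℝ) (hτ0 : 0 < τ) (hτ1 : τ ≤ 1) :
    0 ≤ ((k : ℝ) / τ ^ (N - k)) *
      (∫ s in (0:ℝ)..τ, s ^ (N - 1) / ((N - 1).choose (k - 1)) * (v s) ^ γ) ∧
    ((k : ℝ) / τ ^ (N - k)) *
      (∫ s in (0:ℝ)..τ, s ^ (N - 1) / ((N - 1).choose (k - 1)) * (v s) ^ γ) ≤ τ ^ k * M ^ γ := by
  have hM : 0 ≤ M := (hv 0 (by simp)).1.trans (hv 0 (by simp)).2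
  have hC : (1:ℝ) ≤ ((N - 1).choose (k - 1) : ℝ) := by
    exact_mod_cast Nat.choose_pos (by omega)
  set C : ℝ := ((N - 1).choose (k - 1) : ℝ) with hCdef
  constructor
  · refine mul_nonneg (by positivity) (intervalIntegral.integral_nonneg hτ0.le fun s hs => ?_)
    have h1 := (hv s ⟨hs.1, hs.2.trans hτ1⟩).1
    have h2 := hs.1
    positivity
  · have hint : (∫ s in (0:ℝ)..τ, s ^ (N - 1) / C * (v s) ^ γ) ≤
        ∫ s in (0:ℝ)..τ, s ^ (N - 1) * M ^ γ := by
      refine (le_abs_self _).trans ?_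
      rw [← Real.norm_eq_abs]
      refine intervalIntegral.norm_integral_le_of_norm_le hτ0.le (ae_of_all _ fun s hs => ?_)
        (Continuous.intervalIntegrable (by fun_prop) _ _)
      have h1 := hv s ⟨hs.1.le, hs.2.trans hτ1⟩
      have h2 := hs.1
      have h3 := h1.1
      rw [Real.norm_of_nonneg (by positivity)]
      exact mul_le_mul (div_le_self (by positivity) hC)
        (Real.rpow_le_rpow h1.1 h1.2 hγ.le) (by positivity) (by positivity)
    have hval : (∫ s in (0:ℝ)..τ, s ^ (N - 1) * M ^ γ) = τ ^ N / N * M ^ γ := by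
      obtain ⟨m, rfl⟩ : ∃ m, N = m + 1 := ⟨N - 1, by omega⟩
      rw [intervalIntegral.integral_mul_const, Nat.add_sub_cancel, integral_pow]
      simp
    rw [hval] at hint
    have hN : (0:ℝ) < N := by exact_mod_cast (by omega : 0 < N)
    have hkN' : (k:ℝ) / N ≤ 1 := by
      rw [div_le_one hN]; exact_mod_cast hkN
    have hsplit : τ ^ N = τ ^ (N - k) * τ ^ k := by
      rw [← pow_add]; congr 1; omega
    calc _ ≤ ((k : ℝ) / τ ^ (N - k)) * (τ ^ N / N * M ^ γ) :=
          mul_le_mul_of_nonneg_left hint (by positivity)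
      _ = ((k:ℝ) / N) * (τ ^ k * M ^ γ) := by
          rw [hsplit]; field_simp
      _ ≤ 1 * (τ ^ k * M ^ γ) := mul_le_mul_of_nonneg_right hkN' (by positivity)
      _ = _ := one_mul _

/-- A single power-type factor maps functions with values in `[0, M]` on `[0,1]` to functions with
values in `[0, M^{γ/k}/2]`; the factor `1/2` is `∫_0^1 τ dτ`. -/
theorem Thess_pow_bound (N k : ℕ) (hk1 : 1 ≤ k) (hkN : k ≤ N) (γ : ℝ) (hγ : 0 < γ) (v : ℝ → ℝ)
    (M : ℝ) (hv : ∀ t ∈ Icc (0:ℝ) 1, 0 ≤ v t ∧ v t ≤ M) :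
    ∀ t ∈ Icc (0:ℝ) 1, 0 ≤ Thess N k (fun _ c => c ^ γ) v t ∧
      Thess N k (fun _ c => c ^ γ) v t ≤ M ^ (γ / k) / 2 := by
  intro t ht
  have hM : 0 ≤ M := (hv 0 (by simp)).1.trans (hv 0 (by simp)).2
  have hk0 : (k:ℝ) ≠ 0 := by exact_mod_cast (by omega : k ≠ 0)
  have hpt : ∀ τ ∈ Ioc t 1, 0 ≤ (((k : ℝ) / τ ^ (N - k)) *
      ∫ s in (0:ℝ)..τ, s ^ (N - 1) / ((N - 1).choose (k - 1)) * (v s) ^ γ) ^ ((1 : ℝ) / (k : ℝ)) ∧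
      (((k : ℝ) / τ ^ (N - k)) *
      ∫ s in (0:ℝ)..τ, s ^ (N - 1) / ((N - 1).choose (k - 1)) * (v s) ^ γ) ^ ((1 : ℝ) / (k : ℝ))
        ≤ τ * M ^ (γ / k) := by
    intro τ hτ
    have hτ0 : 0 < τ := lt_of_le_of_lt ht.1 hτ.1
    obtain ⟨h0, h1⟩ := inner_bound N k hk1 hkN γ hγ v M hv τ hτ0 hτ.2
    refine ⟨Real.rpow_nonneg h0 _, (Real.rpow_le_rpow h0 h1 (by positivity)).trans_eq ?_⟩
    rw [Real.mul_rpow (by positivity) (by positivity), ← Real.rpow_natCast, ← Real.rpow_mul hτ0.le,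
      ← Real.rpow_mul hM, mul_one_div_cancel hk0, Real.rpow_one, mul_one_div]
  unfold Thess
  constructor
  · rw [intervalIntegral.integral_of_le ht.2]
    exact setIntegral_nonneg measurableSet_Ioc fun τ hτ => (hpt τ hτ).1
  · refine (le_abs_self _).trans ?_
    rw [← Real.norm_eq_abs]
    refine (intervalIntegral.norm_integral_le_of_norm_le (g := fun τ => τ * M ^ (γ / k)) ht.2
      (ae_of_all _ fun τ hτ => ?_) (Continuous.intervalIntegrable (by fun_prop) _ _)).trans ?_
    · rw [Real.norm_of_nonneg (hpt τ hτ).1]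
      exact (hpt τ hτ).2
    · rw [intervalIntegral.integral_mul_const, integral_id]
      have : 0 ≤ M ^ (γ / k) := by positivity
      nlinarith [sq_nonneg t, mul_nonneg (sq_nonneg t) this]

/-- The iterated estimate. For `n = 0` the composite is the identity, so only `c ≤ 1` holds
there; each additional factor contributes a factor `1/2`. -/
theorem compT_pow_bound (N : ℕ) (M : ℝ) (hM : 0 < M) (v : ℝ → ℝ)
    (hv : ∀ t ∈ Icc (0:ℝ) 1, 0 ≤ v t ∧ v t ≤ M) (n : ℕ) :
    ∀ (k : Fin n → ℕ) (γ : Fin n → ℝ), (∀ i, 1 ≤ k i ∧ k i ≤ N) → (∀ i, 0 < γ i) →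
    ∃ c : ℝ, 0 < c ∧ c ≤ 1 ∧ (0 < n → c ≤ 1 / 2) ∧
      ∀ t ∈ Icc (0:ℝ) 1, 0 ≤ compT N k (fun i _ c => c ^ γ i) v t ∧
        compT N k (fun i _ c => c ^ γ i) v t ≤ c * M ^ (∏ i, (γ i / k i)) := by
  induction n with
  | zero =>
    intro k γ _ _
    exact ⟨1, one_pos, le_rfl, fun h => absurd h (lt_irrefl _), by simpa [compT] using hv⟩
  | succ n ih =>
    intro k γ hk hγ
    obtain ⟨c, hc0, hc1, -, hc⟩ := ih (fun i => k i.succ) (fun i => γ i.succ)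
      (fun i => hk i.succ) (fun i => hγ i.succ)
    have hb := Thess_pow_bound N (k 0) (hk 0).1 (hk 0).2 (γ 0) (hγ 0) _ _ hc
    have hexp : 0 ≤ γ 0 / k 0 := div_nonneg (hγ 0).le (Nat.cast_nonneg _)
    have hle : c ^ (γ 0 / k 0) ≤ 1 := Real.rpow_le_one hc0.le hc1 hexp
    refine ⟨c ^ (γ 0 / k 0) / 2, by positivity, by linarith, fun _ => by linarith, fun t ht => ?_⟩
    have hcomp : compT N k (fun i _ c => c ^ γ i) v =
        Thess N (k 0) (fun _ c => c ^ γ 0)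
          (compT N (fun i : Fin n => k i.succ) (fun i _ c => c ^ γ i.succ) v) := by
      simp [compT, List.ofFn_succ]
    rw [hcomp]
    refine ⟨(hb t ht).1, (hb t ht).2.trans_eq ?_⟩
    rw [Real.mul_rpow hc0.le (by positivity), ← Real.rpow_mul hM.le, Fin.prod_univ_succ,
      mul_comm (γ 0 / (k 0 : ℝ)) (∏ i : Fin n, _)]
    ring

/-- in the power-type case with `γ_1⋯γ_n = k_1⋯k_n`, the composite operator
strictly decreases the supremum norm of every nontrivial nonnegative continuous function. -/
theorem stmt_8 (N n : ℕ) (hN : 2 ≤ N) (hn : 2 ≤ n)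
    (k : Fin n → ℕ) (hk : ∀ i, 1 ≤ k i ∧ k i ≤ N)
    (γ : Fin n → ℝ) (hγ : ∀ i, 0 < γ i)
    (hγk : ∏ i, γ i = ∏ i, (k i : ℝ))
    (v : ℝ → ℝ) (hvc : ContinuousOn v (Icc (0:ℝ) 1))
    (hvnn : ∀ t ∈ Icc (0:ℝ) 1, 0 ≤ v t)
    (hvne : ∃ t ∈ Icc (0:ℝ) 1, v t ≠ 0) :
    supNorm (compT N k (fun i _ c => c ^ γ i) v) < supNorm v := by
  have hbdd : BddAbove ((fun t => |v t|) '' Icc (0:ℝ) 1) :=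
    (isCompact_Icc.image_of_continuousOn hvc.abs).bddAbove
  have hle : ∀ t ∈ Icc (0:ℝ) 1, |v t| ≤ supNorm v := fun t ht =>
    le_csSup hbdd (mem_image_of_mem _ ht)
  have hM : 0 < supNorm v := by
    obtain ⟨t, ht, hne⟩ := hvne
    exact (abs_pos.mpr hne).trans_le (hle t ht)
  obtain ⟨c, -, -, hc, hb⟩ := compT_pow_bound N (supNorm v) hM v
    (fun t ht => ⟨hvnn t ht, (le_abs_self _).trans (hle t ht)⟩) n k γ hk hγ
  have hc2 := hc (by omega)
  have hprod : ∏ i, (γ i / (k i : ℝ)) = 1 := by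
    rw [Finset.prod_div_distrib, hγk]
    refine div_self (Finset.prod_ne_zero_iff.mpr fun i _ => ?_)
    have := (hk i).1
    exact_mod_cast (by omega : k i ≠ 0)
  rw [hprod, Real.rpow_one] at hb
  have hT : supNorm (compT N k (fun i _ c => c ^ γ i) v) ≤ c * supNorm v := by
    refine csSup_le ⟨_, mem_image_of_mem _ (left_mem_Icc.mpr zero_le_one)⟩ ?_
    rintro _ ⟨t, ht, rfl⟩
    exact (abs_of_nonneg (hb t ht).1).trans_le (hb t ht).2
  nlinarith
end

section
/- In the power-type case, for every nonnegative continuous function v on [0,1] and every t ∈ [0,1], the composite operator satisfies T(v)(t) ≤ ‖v‖^{(γ_1·⋯·γ_n)/(k_1·⋯·k_n)}·(1 − t). -/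
/-!
If `0 ≤ w ≤ M` on `[0,1]`, then `∫_0^τ s^{N-1} / C(N-1,k-1) · w(s)^γ ds ≤ M^γ τ^N / N`, and since
`k ≤ N` the base of the `1/k`-th power in `T_{k,f}(w)` is at most `τ^k M^γ ≤ M^γ`. Hence
`0 ≤ T_{k,f}(w)(t) ≤ M^{γ/k} (1 - t)` (`Thess_bound`). Dropping the factor `1 - t ≤ 1`, this
iterates along the composition (`compT_bound`); the outermost operator keeps its factor `1 - t`.
The upper estimates go through norm bounds, which hold for the Bochner integral whether or not
the integrand is integrable, so no regularity of the intermediate functions is needed.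
-/

open Set Filter MeasureTheory

/-- The integrand of the outer integral in `T_{k,f}(w)`, for `f(s,c) = c^γ` and `0 ≤ w ≤ M`, lies
between `0` and `M^{γ/k}`. -/
lemma Thess_integrand_bound {N k : ℕ} (hk : 1 ≤ k) (hkN : k ≤ N) {γ M : ℝ} (hγ : 0 < γ)
    (hM : 0 ≤ M) {w : ℝ → ℝ} (hw : ∀ s ∈ Icc (0:ℝ) 1, 0 ≤ w s ∧ w s ≤ M)
    {τ : ℝ} (hτ0 : 0 < τ) (hτ1 : τ ≤ 1) :
    0 ≤ (((k : ℝ) / τ ^ (N - k)) *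
      ∫ s in (0:ℝ)..τ, s ^ (N - 1) / ((N - 1).choose (k - 1)) * w s ^ γ) ^ ((1 : ℝ) / (k : ℝ)) ∧
    (((k : ℝ) / τ ^ (N - k)) *
      ∫ s in (0:ℝ)..τ, s ^ (N - 1) / ((N - 1).choose (k - 1)) * w s ^ γ) ^ ((1 : ℝ) / (k : ℝ))
      ≤ M ^ (γ / k) := by
  have hN0 : 0 < N := by omega
  have hNR : (0:ℝ) < N := by exact_mod_cast hN0
  have hkR : (0:ℝ) < k := by exact_mod_cast hk
  have hC : (1:ℝ) ≤ ((N - 1).choose (k - 1) : ℝ) := by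
    exact_mod_cast Nat.choose_pos (by omega : k - 1 ≤ N - 1)
  have hMγ : 0 ≤ M ^ γ := Real.rpow_nonneg hM γ
  have hI0 : 0 ≤ ∫ s in (0:ℝ)..τ, s ^ (N - 1) / ((N - 1).choose (k - 1)) * w s ^ γ := by
    refine intervalIntegral.integral_nonneg hτ0.le fun s hs => ?_
    have h1 := (hw s ⟨hs.1, hs.2.trans hτ1⟩).1
    have h2 := hs.1
    positivity
  have hI1 : ∫ s in (0:ℝ)..τ, s ^ (N - 1) / ((N - 1).choose (k - 1)) * w s ^ γ
      ≤ τ ^ N / N * M ^ γ := by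
    have hval : ∫ s in (0:ℝ)..τ, s ^ (N - 1) * M ^ γ = τ ^ N / N * M ^ γ := by
      rw [intervalIntegral.integral_mul_const, integral_pow, Nat.sub_add_cancel hN0,
        zero_pow hN0.ne', sub_zero]
      congr 2
      exact_mod_cast Nat.sub_add_cancel hN0
    rw [← hval]
    refine (Real.le_norm_self _).trans
      (intervalIntegral.norm_integral_le_of_norm_le hτ0.le ?_ ?_)
    · refine Filter.Eventually.of_forall fun s hs => ?_
      obtain ⟨h1, h2⟩ := hw s ⟨hs.1.le, hs.2.trans hτ1⟩
      have h3 := hs.1.le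
      rw [Real.norm_of_nonneg (by positivity)]
      have h4 : s ^ (N - 1) / ((N - 1).choose (k - 1) : ℝ) ≤ s ^ (N - 1) :=
        div_le_self (by positivity) hC
      gcongr
    · exact Continuous.intervalIntegrable (by fun_prop) _ _
  have hB0 : 0 ≤ (k : ℝ) / τ ^ (N - k) *
      ∫ s in (0:ℝ)..τ, s ^ (N - 1) / ((N - 1).choose (k - 1)) * w s ^ γ :=
    mul_nonneg (by positivity) hI0
  have hB1 : (k : ℝ) / τ ^ (N - k) *
      ∫ s in (0:ℝ)..τ, s ^ (N - 1) / ((N - 1).choose (k - 1)) * w s ^ γ ≤ M ^ γ := by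
    calc _ ≤ (k : ℝ) / τ ^ (N - k) * (τ ^ N / N * M ^ γ) := by gcongr
      _ = (k / N) * τ ^ k * M ^ γ := by
        have : τ ^ N = τ ^ (N - k) * τ ^ k := by rw [← pow_add, Nat.sub_add_cancel hkN]
        rw [this]
        field_simp
      _ ≤ 1 * 1 * M ^ γ := by
        have h1 : (k : ℝ) / N ≤ 1 := (div_le_one hNR).2 (by exact_mod_cast hkN)
        have h2 : τ ^ k ≤ 1 := pow_le_one₀ hτ0.le hτ1
        gcongr
      _ = M ^ γ := by ring
  refine ⟨Real.rpow_nonneg hB0 _, ?_⟩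
  calc _ ≤ (M ^ γ) ^ ((1:ℝ) / k) := Real.rpow_le_rpow hB0 hB1 (by positivity)
    _ = M ^ (γ / k) := by rw [← Real.rpow_mul hM, mul_one_div]

/-- The estimate for a single operator with power nonlinearity. -/
lemma Thess_bound {N k : ℕ} (hk : 1 ≤ k) (hkN : k ≤ N) {γ M : ℝ} (hγ : 0 < γ)
    (hM : 0 ≤ M) {w : ℝ → ℝ} (hw : ∀ s ∈ Icc (0:ℝ) 1, 0 ≤ w s ∧ w s ≤ M)
    {t : ℝ} (ht : t ∈ Icc (0:ℝ) 1) :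
    0 ≤ Thess N k (fun _ c => c ^ γ) w t ∧
      Thess N k (fun _ c => c ^ γ) w t ≤ M ^ (γ / k) * (1 - t) := by
  unfold Thess
  constructor
  · -- Integrating over `Ioc t 1` keeps `τ = 0` out, where `k / τ ^ (N - k)` has a junk value.
    rw [intervalIntegral.integral_of_le ht.2]
    exact setIntegral_nonneg measurableSet_Ioc fun τ hτ =>
      (Thess_integrand_bound hk hkN hγ hM hw (ht.1.trans_lt hτ.1) hτ.2).1
  · rw [← abs_of_nonneg (sub_nonneg.2 ht.2)]
    refine (Real.le_norm_self _).trans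
      (intervalIntegral.norm_integral_le_of_norm_le_const fun τ hτ => ?_)
    rw [uIoc_of_le ht.2] at hτ
    obtain ⟨h0, h1⟩ := Thess_integrand_bound hk hkN hγ hM hw (ht.1.trans_lt hτ.1) hτ.2
    rwa [Real.norm_of_nonneg h0]

lemma compT_succ (N : ℕ) {n : ℕ} (k : Fin (n + 1) → ℕ) (f : Fin (n + 1) → ℝ → ℝ → ℝ)
    (v : ℝ → ℝ) :
    compT N k f v =
      Thess N (k 0) (f 0) (compT N (fun i => k i.succ) (fun i => f i.succ) v) := by
  simp [compT, List.ofFn_succ]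

/-- The exponent produced by applying one more operator to a function bounded by
`M ^ (∏ γ / ∏ k)`. -/
lemma rpow_prod_succ {n : ℕ} {M : ℝ} (hM : 0 ≤ M) (k : Fin (n + 1) → ℕ) (γ : Fin (n + 1) → ℝ) :
    (M ^ ((∏ i : Fin n, γ i.succ) / (∏ i : Fin n, (k i.succ : ℝ)))) ^ (γ 0 / k 0) =
      M ^ ((∏ i, γ i) / (∏ i, (k i : ℝ))) := by
  rw [← Real.rpow_mul hM, Fin.prod_univ_succ, Fin.prod_univ_succ, div_mul_div_comm,
    mul_comm (γ 0), mul_comm (k 0 : ℝ)]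

/-- The uniform bound for the composite of any number of operators; the empty composite is the
identity, for which the exponent is `1`. -/
lemma compT_bound {N : ℕ} {v : ℝ → ℝ} {M : ℝ} (hM : 0 ≤ M)
    (hv : ∀ s ∈ Icc (0:ℝ) 1, 0 ≤ v s ∧ v s ≤ M) {n : ℕ} (k : Fin n → ℕ)
    (hk : ∀ i, 1 ≤ k i ∧ k i ≤ N) (γ : Fin n → ℝ) (hγ : ∀ i, 0 < γ i) :
    ∀ t ∈ Icc (0:ℝ) 1, 0 ≤ compT N k (fun i _ c => c ^ γ i) v t ∧
      compT N k (fun i _ c => c ^ γ i) v t ≤ M ^ ((∏ i, γ i) / (∏ i, (k i : ℝ))) := by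
  induction n with
  | zero => simpa [compT] using hv
  | succ n ih =>
    intro t ht
    have h := Thess_bound (hk 0).1 (hk 0).2 (hγ 0) (Real.rpow_nonneg hM _)
      (ih (fun i => k i.succ) (fun i => hk _) (fun i => γ i.succ) fun i => hγ _) ht
    rw [rpow_prod_succ hM] at h
    rw [compT_succ]
    exact ⟨h.1, h.2.trans (mul_le_of_le_one_right (Real.rpow_nonneg hM _) (by linarith [ht.1]))⟩

/-- in the power-type case, `T(v)(t) ≤ ‖v‖^{(γ_1⋯γ_n)/(k_1⋯k_n)}·(1 − t)`. -/
theorem stmt_10 (N n : ℕ) (hN : 2 ≤ N) (hn : 2 ≤ n)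
    (k : Fin n → ℕ) (hk : ∀ i, 1 ≤ k i ∧ k i ≤ N)
    (γ : Fin n → ℝ) (hγ : ∀ i, 0 < γ i)
    (v : ℝ → ℝ) (hvc : ContinuousOn v (Icc (0:ℝ) 1))
    (hvnn : ∀ t ∈ Icc (0:ℝ) 1, 0 ≤ v t) :
    ∀ t ∈ Icc (0:ℝ) 1,
      compT N k (fun i _ c => c ^ γ i) v t ≤
        supNorm v ^ ((∏ i, γ i) / (∏ i, (k i : ℝ))) * (1 - t) := by
  have hle : ∀ s ∈ Icc (0:ℝ) 1, 0 ≤ v s ∧ v s ≤ supNorm v := fun s hs =>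
    ⟨hvnn s hs, (le_abs_self _).trans
      (le_csSup (isCompact_Icc.image_of_continuousOn hvc.abs).bddAbove (mem_image_of_mem _ hs))⟩
  have hM : 0 ≤ supNorm v :=
    (hle 0 (by simp)).1.trans (hle 0 (by simp)).2
  intro t ht
  obtain ⟨m, rfl⟩ : ∃ m, n = m + 1 := ⟨n - 1, by omega⟩
  have h := Thess_bound (hk 0).1 (hk 0).2 (hγ 0) (Real.rpow_nonneg hM _)
    (compT_bound hM hle (fun i => k i.succ) (fun i => hk _) (fun i => γ i.succ) fun i => hγ _) ht
  rw [rpow_prod_succ hM] at h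
  rw [compT_succ]
  exact h.2
end

section
/- Assume that for all i = 1,…,n one has f̄_i^∞ ∈ (0,∞) and that the positive exponents satisfy β_1·β_2·⋯·β_n < k_1·k_2·⋯·k_n. Then there exists a constant R > 0 such that every v ∈ K with ‖v‖ = R satisfies ‖T(v)‖ < ‖v‖. -/
/-!
The limsup hypothesis and compactness give a growth bound `f_i(t, c) ≤ C M ^ β_i` for `0 ≤ c ≤ M` and
every `M ≥ 1` (`exists_growth_bound`). Inserting it in the two integrals shows that `T_i` sends functions
with values in `[0, M]` to functions with values in `[0, D M ^ (β_i / k_i)]`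
(`hasPowerGrowth_Thess`); the powers of `τ` are harmless because
`τ ^ N / τ ^ (N - k) = τ ^ k ≤ 1`. Such estimates compose, the exponents being multiplied
(`hasPowerGrowth_foldr`), so `‖T v‖ ≤ D ‖v‖ ^ γ` whenever `‖v‖ ≥ 1`, with
`γ = ∏ β_i / ∏ k_i < 1`. Any `R ≥ 1` with `D R ^ γ < R` then works.

All integral estimates used here (nonnegativity, and the bound by length times the supremum) hold
without integrability, since a non-integrable integrand has integral `0`; so the iterates need not be
shown to be continuous.
-/

open Set Filter MeasureTheory

/-- `liminf_{c→0⁺} min_{0≤t≤1} f(t,c)/c^a`, as an extended real number. -/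
noncomputable def fLow0 (f : ℝ → ℝ → ℝ) (a : ℝ) : EReal :=
  Filter.liminf
    (fun c : ℝ => ((sInf ((fun t => f t c / c ^ a) '' Icc (0:ℝ) 1) : ℝ) : EReal))
    (nhdsWithin 0 (Ioi 0))

/-- `limsup_{c→0⁺} max_{0≤t≤1} f(t,c)/c^a`, as an extended real number. -/
noncomputable def fUp0 (f : ℝ → ℝ → ℝ) (a : ℝ) : EReal :=
  Filter.limsup
    (fun c : ℝ => ((sSup ((fun t => f t c / c ^ a) '' Icc (0:ℝ) 1) : ℝ) : EReal))
    (nhdsWithin 0 (Ioi 0))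

/-- `liminf_{c→∞} min_{0≤t≤1} f(t,c)/c^b`, as an extended real number. -/
noncomputable def fLowInf (f : ℝ → ℝ → ℝ) (b : ℝ) : EReal :=
  Filter.liminf
    (fun c : ℝ => ((sInf ((fun t => f t c / c ^ b) '' Icc (0:ℝ) 1) : ℝ) : EReal))
    Filter.atTop

/-- `limsup_{c→∞} max_{0≤t≤1} f(t,c)/c^b`, as an extended real number. -/
noncomputable def fUpInf (f : ℝ → ℝ → ℝ) (b : ℝ) : EReal :=
  Filter.limsup
    (fun c : ℝ => ((sSup ((fun t => f t c / c ^ b) '' Icc (0:ℝ) 1) : ℝ) : EReal))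
    Filter.atTop

/-- `S` maps functions with values in `[0, M]` on the unit interval to functions with values in
`[0, D * M ^ γ]`, with one constant `D ≥ 1` for all `M ≥ 1`. -/
def HasPowerGrowth (S : (ℝ → ℝ) → (ℝ → ℝ)) (γ : ℝ) : Prop :=
  ∃ D : ℝ, 1 ≤ D ∧ ∀ M : ℝ, 1 ≤ M → ∀ u : ℝ → ℝ, (∀ t ∈ Icc (0:ℝ) 1, u t ∈ Icc 0 M) →
    ∀ t ∈ Icc (0:ℝ) 1, S u t ∈ Icc 0 (D * M ^ γ)

/-- Near infinity the bound comes from the finite limsup, and on the remaining compact set from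
continuity. -/
lemma exists_growth_bound (f : ℝ → ℝ → ℝ) (β : ℝ) (hβ : 0 < β)
    (hf : ContinuousOn (fun p : ℝ × ℝ => f p.1 p.2) (Icc (0:ℝ) 1 ×ˢ Ici (0:ℝ)))
    (hInf : fUpInf f β < ⊤) :
    ∃ C : ℝ, 1 ≤ C ∧ ∀ M : ℝ, 1 ≤ M → ∀ t ∈ Icc (0:ℝ) 1, ∀ c ∈ Icc 0 M, f t c ≤ C * M ^ β := by
  obtain ⟨A, hA, -⟩ := EReal.lt_iff_exists_real_btwn.1 hInf
  have hev := eventually_lt_of_limsup_lt hA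
  obtain ⟨c₀, hc₀⟩ := eventually_atTop.1 (hev.and (eventually_ge_atTop (1:ℝ)))
  have hcpt : IsCompact (Icc (0:ℝ) 1 ×ˢ Icc (0:ℝ) c₀) := isCompact_Icc.prod isCompact_Icc
  obtain ⟨B, hB⟩ := hcpt.exists_bound_of_continuousOn
    (hf.mono (prod_mono_right Icc_subset_Ici_self))
  refine ⟨max 1 (max |A| |B|), le_max_left _ _, fun M hM t ht c hc => ?_⟩
  have hM1 : 1 ≤ M ^ β := Real.one_le_rpow hM hβ.le
  rcases le_total c c₀ with h | h
  · have h1 : f t c ≤ B := (le_abs_self _).trans (hB (t, c) ⟨ht, hc.1, h⟩)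
    calc f t c ≤ |B| * 1 := by rw [mul_one]; exact h1.trans (le_abs_self B)
      _ ≤ max 1 (max |A| |B|) * M ^ β := by
        gcongr
        exact (le_max_right _ _).trans (le_max_right _ _)
  · obtain ⟨h1, h2⟩ := hc₀ c h
    have hcp : 0 < c ^ β := Real.rpow_pos_of_pos (by linarith) β
    have hcont : ContinuousOn (fun s => f s c / c ^ β) (Icc (0:ℝ) 1) := by
      refine ContinuousOn.div_const ?_ _
      exact hf.comp (f := fun s : ℝ => (s, c)) (by fun_prop) fun s hs => ⟨hs, hc.1⟩
    have h3 : f t c / c ^ β ≤ A :=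
      (le_csSup (isCompact_Icc.image_of_continuousOn hcont).bddAbove (mem_image_of_mem _ ht)).trans
        (EReal.coe_lt_coe_iff.1 h1).le
    calc f t c ≤ A * c ^ β := (div_le_iff₀ hcp).1 h3
      _ ≤ |A| * c ^ β := by gcongr; exact le_abs_self A
      _ ≤ max 1 (max |A| |B|) * M ^ β := by
        gcongr
        · exact (le_max_left _ _).trans (le_max_right _ _)
        · exact hc.2

/-- The base of the `k`-th root in `Thess` lies in `[0, k B]` if `g s = f(s, u(s))` lies in
`[0, B]`: the inner integral is at most `τ ^ N * B`, and `τ ^ N / τ ^ (N - k) = τ ^ k ≤ 1`. -/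
lemma inner_mem_Icc (N k : ℕ) (hk : 1 ≤ k ∧ k ≤ N) (g : ℝ → ℝ) (B : ℝ)
    (hg : ∀ s ∈ Icc (0:ℝ) 1, g s ∈ Icc 0 B) (τ : ℝ) (hτ : τ ∈ Ioc (0:ℝ) 1) :
    ((k : ℝ) / τ ^ (N - k)) * (∫ s in (0:ℝ)..τ, s ^ (N - 1) / ((N - 1).choose (k - 1)) * g s)
      ∈ Icc 0 (k * B) := by
  obtain ⟨hτ0, hτ1⟩ := hτ
  have hB : 0 ≤ B := (hg 0 (by simp)).1.trans (hg 0 (by simp)).2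
  have hch : (1:ℝ) ≤ (N - 1).choose (k - 1) := by
    exact_mod_cast Nat.choose_pos (by omega : k - 1 ≤ N - 1)
  have h0 : 0 ≤ ∫ s in (0:ℝ)..τ, s ^ (N - 1) / ((N - 1).choose (k - 1)) * g s := by
    refine intervalIntegral.integral_nonneg hτ0.le fun s hs => ?_
    have := (hg s ⟨hs.1, hs.2.trans hτ1⟩).1
    have := hs.1
    positivity
  have h1 : (∫ s in (0:ℝ)..τ, s ^ (N - 1) / ((N - 1).choose (k - 1)) * g s) ≤ τ ^ N * B := by
    have h2 := intervalIntegral.norm_integral_le_of_norm_le_const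
      (f := fun s => s ^ (N - 1) / ((N - 1).choose (k - 1)) * g s) (a := 0) (b := τ)
      (C := τ ^ (N - 1) * B) (fun s hs => ?_)
    · rw [sub_zero, abs_of_pos hτ0] at h2
      calc _ ≤ τ ^ (N - 1) * B * τ := (le_abs_self _).trans h2
        _ = τ ^ (N - 1 + 1) * B := by ring
        _ = τ ^ N * B := by rw [Nat.sub_add_cancel (by omega)]
    · rw [uIoc_of_le hτ0.le] at hs
      have hs0 := hs.1.le
      obtain ⟨hg0, hg1⟩ := hg s ⟨hs0, hs.2.trans hτ1⟩
      rw [Real.norm_of_nonneg (by positivity)]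
      gcongr
      calc s ^ (N - 1) / ((N - 1).choose (k - 1) : ℝ) ≤ s ^ (N - 1) :=
            div_le_self (by positivity) hch
        _ ≤ τ ^ (N - 1) := by gcongr; exact hs.2
  refine ⟨by positivity, ?_⟩
  have hsplit : τ ^ N = τ ^ (N - k) * τ ^ k := by rw [← pow_add, Nat.sub_add_cancel hk.2]
  calc _ ≤ ((k : ℝ) / τ ^ (N - k)) * (τ ^ N * B) := by gcongr
    _ = k * B * τ ^ k := by rw [hsplit]; field_simp
    _ ≤ k * B * 1 := by gcongr; exact pow_le_one₀ hτ0.le hτ1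
    _ = k * B := mul_one _

lemma hasPowerGrowth_Thess (N k : ℕ) (hk : 1 ≤ k ∧ k ≤ N) (f : ℝ → ℝ → ℝ) (β : ℝ) (hβ : 0 < β)
    (hf : ContinuousOn (fun p : ℝ × ℝ => f p.1 p.2) (Icc (0:ℝ) 1 ×ˢ Ici (0:ℝ)))
    (hfnn : ∀ t ∈ Icc (0:ℝ) 1, ∀ c ∈ Ici (0:ℝ), 0 ≤ f t c)
    (hInf : fUpInf f β < ⊤) :
    HasPowerGrowth (Thess N k f) (β / k) := by
  obtain ⟨C, hC, hbound⟩ := exists_growth_bound f β hβ hf hInf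
  have hk1 : (1:ℝ) ≤ k := by exact_mod_cast hk.1
  refine ⟨(k * C) ^ ((1:ℝ) / k), Real.one_le_rpow (by nlinarith) (by positivity), ?_⟩
  intro M hM u hu t ht
  have hM0 : 0 ≤ M := by linarith
  have hin := inner_mem_Icc N k hk (fun s => f s (u s)) (C * M ^ β)
    fun s hs => ⟨hfnn s hs _ (hu s hs).1, hbound M hM s hs _ (hu s hs)⟩
  have hval : ((k:ℝ) * (C * M ^ β)) ^ ((1:ℝ) / k) = (k * C) ^ ((1:ℝ) / k) * M ^ (β / k) := by
    rw [← mul_assoc, Real.mul_rpow (by positivity) (by positivity), ← Real.rpow_mul hM0,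
      mul_one_div]
  have h2 := intervalIntegral.norm_integral_le_of_norm_le_const
    (f := fun τ => (((k : ℝ) / τ ^ (N - k)) *
      ∫ s in (0:ℝ)..τ, s ^ (N - 1) / ((N - 1).choose (k - 1)) * f s (u s)) ^ ((1 : ℝ) / (k : ℝ)))
    (a := t) (b := 1) (C := (k * C) ^ ((1:ℝ) / k) * M ^ (β / k)) (fun τ hτ => ?_)
  · constructor
    · refine intervalIntegral.integral_nonneg_of_ae_restrict ht.2 ?_
      -- The estimate of the base is only available for `τ > 0`, so the endpoint is discarded.
      rw [← restrict_Ioc_eq_restrict_Icc]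
      filter_upwards [ae_restrict_mem measurableSet_Ioc] with τ hτ
      exact Real.rpow_nonneg (hin τ ⟨ht.1.trans_lt hτ.1, hτ.2⟩).1 _
    · refine (le_abs_self _).trans (h2.trans ?_)
      rw [abs_of_nonneg (by linarith [ht.2])]
      exact mul_le_of_le_one_right (by positivity) (by linarith [ht.1])
  · rw [uIoc_of_le ht.2] at hτ
    obtain ⟨ha, hb⟩ := hin τ ⟨ht.1.trans_lt hτ.1, hτ.2⟩
    rw [Real.norm_of_nonneg (Real.rpow_nonneg ha _), ← hval]
    exact Real.rpow_le_rpow ha hb (by positivity)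

lemma HasPowerGrowth.comp {S S' : (ℝ → ℝ) → (ℝ → ℝ)} {γ γ' : ℝ} (hγ : 0 ≤ γ) (hγ' : 0 ≤ γ')
    (h : HasPowerGrowth S γ) (h' : HasPowerGrowth S' γ') : HasPowerGrowth (S ∘ S') (γ * γ') := by
  obtain ⟨D, hD, hS⟩ := h
  obtain ⟨D', hD', hS'⟩ := h'
  refine ⟨D * D' ^ γ, one_le_mul_of_one_le_of_one_le hD (Real.one_le_rpow hD' hγ), ?_⟩
  intro M hM u hu t ht
  have hM' : 1 ≤ D' * M ^ γ' :=
    one_le_mul_of_one_le_of_one_le hD' (Real.one_le_rpow hM hγ')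
  have hM0 : 0 ≤ M := by linarith
  have key := hS _ hM' (S' u) (hS' M hM u hu) t ht
  rwa [Real.mul_rpow (by linarith) (by positivity), ← Real.rpow_mul hM0, mul_comm γ', ← mul_assoc]
    at key

lemma hasPowerGrowth_foldr : ∀ {n : ℕ} (S : Fin n → (ℝ → ℝ) → (ℝ → ℝ)) (γ : Fin n → ℝ),
    (∀ i, 0 ≤ γ i) → (∀ i, HasPowerGrowth (S i) (γ i)) →
      HasPowerGrowth ((List.ofFn S).foldr (· ∘ ·) id) (∏ i, γ i)
  | 0, S, γ, _, _ => ⟨1, le_rfl, fun M _ u hu t ht => by simpa using hu t ht⟩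
  | n + 1, S, γ, hγ, hS => by
    rw [List.ofFn_succ, List.foldr_cons, Fin.prod_univ_succ]
    exact (hS 0).comp (hγ 0) (Finset.prod_nonneg fun i _ => hγ i.succ)
      (hasPowerGrowth_foldr _ _ (fun i => hγ i.succ) fun i => hS i.succ)

theorem stmt_13 (N n : ℕ) (hN : 2 ≤ N) (hn : 2 ≤ n)
    (k : Fin n → ℕ) (hk : ∀ i, 1 ≤ k i ∧ k i ≤ N)
    (f : Fin n → ℝ → ℝ → ℝ)
    (hfc : ∀ i, ContinuousOn (fun p : ℝ × ℝ => f i p.1 p.2) (Icc (0:ℝ) 1 ×ˢ Ici (0:ℝ)))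
    (hfnn : ∀ i, ∀ t ∈ Icc (0:ℝ) 1, ∀ c ∈ Ici (0:ℝ), 0 ≤ f i t c)
    (hfne : ∀ i, ∃ t ∈ Icc (0:ℝ) 1, ∃ c ∈ Ici (0:ℝ), f i t c ≠ 0)
    (β : Fin n → ℝ) (hβ : ∀ i, 0 < β i)
    (hInf : ∀ i, 0 < fUpInf (f i) (β i) ∧ fUpInf (f i) (β i) < ⊤)
    (hβk : ∏ i, β i < ∏ i, (k i : ℝ)) :
    ∃ R > (0:ℝ), ∀ v : ℝ → ℝ, inK v → supNorm v = R →
      supNorm (compT N k f v) < supNorm v := by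
  have hkpos : ∀ i, (0:ℝ) < k i := fun i => by exact_mod_cast (hk i).1
  obtain ⟨D, -, hT⟩ : HasPowerGrowth (compT N k f) (∏ i, β i / k i) :=
    hasPowerGrowth_foldr _ _ (fun i => div_nonneg (hβ i).le (hkpos i).le) fun i =>
      hasPowerGrowth_Thess N (k i) (hk i) (f i) (β i) (hβ i) (hfc i) (hfnn i) (hInf i).2
  have hγ : ∏ i, β i / (k i : ℝ) < 1 := by
    rw [Finset.prod_div_distrib, div_lt_one (Finset.prod_pos fun i _ => hkpos i)]
    exact hβk
  set γ : ℝ := ∏ i, β i / (k i : ℝ)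
  obtain ⟨R, hR, hR1⟩ := (((tendsto_rpow_atTop (sub_pos.2 hγ)).eventually_gt_atTop D).and
    (eventually_ge_atTop (1:ℝ))).exists
  have hR0 : 0 < R := by linarith
  refine ⟨R, hR0, fun v hv hvR => ?_⟩
  have hvmem : ∀ t ∈ Icc (0:ℝ) 1, v t ∈ Icc 0 R := fun t ht => by
    refine ⟨hv.2.1 t ht, ?_⟩
    rw [← hvR]
    exact (le_abs_self _).trans (le_csSup
      (isCompact_Icc.image_of_continuousOn hv.1.abs).bddAbove (mem_image_of_mem _ ht))
  have hle : supNorm (compT N k f v) ≤ D * R ^ γ := by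
    refine csSup_le ((nonempty_Icc.2 zero_le_one).image _) ?_
    rintro _ ⟨t, ht, rfl⟩
    obtain ⟨h0, h1⟩ := hT R hR1 v hvmem t ht
    exact (abs_of_nonneg h0).trans_le h1
  calc supNorm (compT N k f v) ≤ D * R ^ γ := hle
    _ < R ^ (1 - γ) * R ^ γ := by gcongr
    _ = R := by rw [← Real.rpow_add hR0, sub_add_cancel, Real.rpow_one]
    _ = supNorm v := hvR.symm
end

section
/- Assume that for all i = 1,…,n one has f̄_i^0 ∈ (0,∞) and that the positive exponents satisfy α_1·α_2·⋯·α_n > k_1·k_2·⋯·k_n. Then there exists a constant r > 0 such that every v ∈ K with ‖v‖ = r satisfies ‖T(v)‖ < ‖v‖. -/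
/-!
The reason for the result is that each operator `T_{k,f}` acts on small functions at worst like a
power: `limsup f(t,c)/c^α < ∞` gives `f(t,c) ≤ C c^α` for small `c ≥ 0` (`f_le_power`), and inserting
this in the double integral gives `0 ≤ v ≤ M ⟹ 0 ≤ T_{k,f} v ≤ D M^{α/k}` for all small `M`
(`powBd_Thess`).  Such power bounds compose, with exponents multiplying (`powBd_comp`), so `T` obeys
the bound with exponent `∏ α_i / ∏ k_i > 1`, and `D r^β < r` for small `r` when `β > 1`.
All integral estimates are sup bounds, so continuity or measurability of the intermediate functions
`T_i(⋯)` is never needed.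
-/

open Set Filter MeasureTheory

open Topology

/-- The operator `S` is power-bounded with exponent `β` near zero: for some `D > 0` and all small
`M > 0`, if `0 ≤ v ≤ M` on `[0,1]` then `0 ≤ S v ≤ D M^β` on `[0,1]`. -/
def PowBd (S : (ℝ → ℝ) → (ℝ → ℝ)) (β : ℝ) : Prop :=
  ∃ D > (0:ℝ), ∀ᶠ M in 𝓝[>] (0:ℝ), ∀ v : ℝ → ℝ, (∀ t ∈ Icc (0:ℝ) 1, v t ∈ Icc 0 M) →
    ∀ t ∈ Icc (0:ℝ) 1, S v t ∈ Icc 0 (D * M ^ β)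

lemma tendsto_mul_rpow_nhdsGT {D β : ℝ} (hD : 0 < D) (hβ : 0 < β) :
    Tendsto (fun M : ℝ => D * M ^ β) (𝓝[>] 0) (𝓝[>] 0) := by
  refine tendsto_nhdsWithin_iff.2 ⟨?_, ?_⟩
  · have h : Tendsto (fun M : ℝ => D * M ^ β) (𝓝 0) (𝓝 (D * 0 ^ β)) :=
      (Real.continuousAt_rpow_const 0 β (Or.inr hβ.le)).tendsto.const_mul D
    rw [Real.zero_rpow hβ.ne', mul_zero] at h
    exact h.mono_left nhdsWithin_le_nhds
  · filter_upwards [self_mem_nhdsWithin] with M hM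
    exact mul_pos hD (Real.rpow_pos_of_pos hM β)

lemma powBd_comp {S R : (ℝ → ℝ) → (ℝ → ℝ)} {β γ : ℝ} (hγ : 0 < γ)
    (hS : PowBd S β) (hR : PowBd R γ) : PowBd (S ∘ R) (β * γ) := by
  obtain ⟨D, hD, hS⟩ := hS
  obtain ⟨E, hE, hR⟩ := hR
  refine ⟨D * E ^ β, mul_pos hD (Real.rpow_pos_of_pos hE β), ?_⟩
  filter_upwards [hR, (tendsto_mul_rpow_nhdsGT hE hγ).eventually hS, self_mem_nhdsWithin]
    with M h1 h2 hM v hv t ht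
  have hM' : 0 < M := hM
  have := h2 (R v) (h1 v hv) t ht
  rwa [Real.mul_rpow hE.le (Real.rpow_nonneg hM'.le γ), ← Real.rpow_mul hM'.le, mul_comm γ β,
    ← mul_assoc] at this

lemma powBd_foldr {n : ℕ} (S : Fin n → (ℝ → ℝ) → (ℝ → ℝ)) (β : Fin n → ℝ) (hβ : ∀ i, 0 < β i)
    (hS : ∀ i, PowBd (S i) (β i)) : PowBd ((List.ofFn S).foldr (· ∘ ·) id) (∏ i, β i) := by
  induction n with
  | zero =>
    refine ⟨1, one_pos, Eventually.of_forall fun M v hv t ht => ?_⟩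
    simpa using hv t ht
  | succ n ih =>
    rw [List.ofFn_succ, List.foldr_cons, Fin.prod_univ_succ]
    exact powBd_comp (Finset.prod_pos fun i _ => hβ _) (hS 0)
      (ih _ _ (fun i => hβ i.succ) (fun i => hS i.succ))

/-- Near `c = 0`, a finite upper limit of `f(t,c)/c^a` bounds `f(t,c)` by `C c^a`; the case `c = 0`
(that is, `f(t,0) = 0`) follows by continuity. -/
lemma f_le_power {f : ℝ → ℝ → ℝ} {a : ℝ} (ha : 0 < a)
    (hfc : ContinuousOn (fun p : ℝ × ℝ => f p.1 p.2) (Icc (0:ℝ) 1 ×ˢ Ici (0:ℝ)))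
    (h0 : fUp0 f a < ⊤) :
    ∃ C > (0:ℝ), ∃ δ > (0:ℝ), ∀ t ∈ Icc (0:ℝ) 1, ∀ c, 0 ≤ c → c < δ → f t c ≤ C * c ^ a := by
  obtain ⟨C, hC, -⟩ := EReal.lt_iff_exists_real_btwn.1 h0
  have hev := eventually_lt_of_limsup_lt hC
  obtain ⟨δ, hδ, hsub⟩ := mem_nhdsGT_iff_exists_Ioo_subset.1 hev
  have hδ' : 0 < δ := hδ
  have key : ∀ t ∈ Icc (0:ℝ) 1, ∀ c, 0 < c → c < δ → f t c ≤ (|C| + 1) * c ^ a := by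
    intro t ht c hc hcδ
    have h1 : sSup ((fun t => f t c / c ^ a) '' Icc (0:ℝ) 1) < C := by
      exact_mod_cast hsub ⟨hc, hcδ⟩
    have hcont : ContinuousOn (fun t => f t c / c ^ a) (Icc (0:ℝ) 1) := by
      refine ContinuousOn.div_const ?_ _
      exact hfc.comp (f := fun t : ℝ => (t, c)) (by fun_prop) (fun t ht => ⟨ht, hc.le⟩)
    have h2 := le_csSup (isCompact_Icc.image_of_continuousOn hcont).bddAbove
      (mem_image_of_mem _ ht)
    have h3 : f t c / c ^ a ≤ |C| + 1 := by
      have := le_abs_self C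
      exact (h2.trans h1.le).trans (by linarith)
    exact (div_le_iff₀ (Real.rpow_pos_of_pos hc a)).1 h3
  refine ⟨|C| + 1, by positivity, δ, hδ', fun t ht c hc hcδ => ?_⟩
  rcases hc.eq_or_lt with rfl | hc
  · have hcont : ContinuousOn (fun c => f t c) (Ici (0:ℝ)) :=
      hfc.comp (f := fun c : ℝ => (t, c)) (by fun_prop) (fun c hc => ⟨ht, hc⟩)
    have h1 : Tendsto (fun c => f t c) (𝓝[>] 0) (𝓝 (f t 0)) :=
      (hcont 0 self_mem_Ici).mono_left (nhdsWithin_mono _ Ioi_subset_Ici_self)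
    have h2 : Tendsto (fun c : ℝ => (|C| + 1) * c ^ a) (𝓝[>] 0) (𝓝 0) :=
      (tendsto_mul_rpow_nhdsGT (by positivity) ha).mono_right nhdsWithin_le_nhds
    rw [Real.zero_rpow ha.ne', mul_zero]
    refine le_of_tendsto_of_tendsto h1 h2 ?_
    filter_upwards [Ioo_mem_nhdsGT hδ'] with c hc
    exact key t ht c hc.1 hc.2
  · exact key t ht c hc hcδ

lemma powBd_Thess {N k : ℕ} (hk : 1 ≤ k) (hkN : k ≤ N) {f : ℝ → ℝ → ℝ} {a : ℝ} (ha : 0 < a)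
    (hfc : ContinuousOn (fun p : ℝ × ℝ => f p.1 p.2) (Icc (0:ℝ) 1 ×ˢ Ici (0:ℝ)))
    (hfnn : ∀ t ∈ Icc (0:ℝ) 1, ∀ c ∈ Ici (0:ℝ), 0 ≤ f t c)
    (h0 : fUp0 f a < ⊤) : PowBd (Thess N k f) (a / k) := by
  obtain ⟨C, hC, δ, hδ, hle⟩ := f_le_power ha hfc h0
  have hk0 : (0:ℝ) < k := by exact_mod_cast hk
  refine ⟨(k * C) ^ ((1:ℝ) / k), by positivity, ?_⟩
  filter_upwards [Ioo_mem_nhdsGT hδ] with M hM v hv t ht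
  obtain ⟨hM0, hMδ⟩ := hM
  have hB : (0:ℝ) < C * M ^ a := mul_pos hC (Real.rpow_pos_of_pos hM0 a)
  have hch : (1:ℝ) ≤ ((N - 1).choose (k - 1) : ℝ) := by
    exact_mod_cast Nat.choose_pos (by omega)
  have hf : ∀ s ∈ Icc (0:ℝ) 1, 0 ≤ f s (v s) ∧ f s (v s) ≤ C * M ^ a := by
    intro s hs
    obtain ⟨h1, h2⟩ := hv s hs
    refine ⟨hfnn s hs _ h1, (hle s hs _ h1 (h2.trans_lt hMδ)).trans ?_⟩
    gcongr
  -- `0 ≤ ∫_0^τ ⋯ ≤ C M^a τ^N`, whence the integrand of the outer integral is at most `(kCM^a)^{1/k}`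
  have hinner : ∀ τ ∈ Icc (0:ℝ) 1,
      0 ≤ (∫ s in (0:ℝ)..τ, s ^ (N - 1) / ((N - 1).choose (k - 1)) * f s (v s)) ∧
      (∫ s in (0:ℝ)..τ, s ^ (N - 1) / ((N - 1).choose (k - 1)) * f s (v s))
        ≤ C * M ^ a * τ ^ N := by
    intro τ hτ
    constructor
    · refine intervalIntegral.integral_nonneg hτ.1 fun s hs => ?_
      have := (hf s ⟨hs.1, hs.2.trans hτ.2⟩).1
      have := hs.1
      positivity
    · have h := intervalIntegral.norm_integral_le_of_norm_le_const (a := (0:ℝ)) (b := τ)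
        (f := fun s => s ^ (N - 1) / ((N - 1).choose (k - 1)) * f s (v s))
        (C := τ ^ (N - 1) * (C * M ^ a)) ?_
      · refine (le_abs_self _).trans (h.trans_eq ?_)
        rw [sub_zero, abs_of_nonneg hτ.1]
        have : τ ^ N = τ ^ (N - 1) * τ := by rw [← pow_succ]; congr 1; omega
        rw [this]; ring
      · intro s hs
        rw [uIoc_of_le hτ.1] at hs
        obtain ⟨h1, h2⟩ := hf s ⟨hs.1.le, hs.2.trans hτ.2⟩
        have hs0 := hs.1.le
        rw [Real.norm_of_nonneg (by positivity)]
        have : s ^ (N - 1) / ((N - 1).choose (k - 1) : ℝ) ≤ τ ^ (N - 1) :=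
          (div_le_self (by positivity) hch).trans (pow_le_pow_left₀ hs0 hs.2 _)
        have := hτ.1
        gcongr
  have hpow : (k * C) ^ ((1:ℝ) / k) * M ^ (a / k) = (k * (C * M ^ a)) ^ ((1:ℝ) / k) := by
    rw [← mul_assoc, Real.mul_rpow (mul_pos hk0 hC).le (Real.rpow_nonneg hM0.le a), ← Real.rpow_mul hM0.le,
      mul_one_div]
  have houter : ∀ τ ∈ Icc (0:ℝ) 1, 0 < τ →
      ((k : ℝ) / τ ^ (N - k)) *
        (∫ s in (0:ℝ)..τ, s ^ (N - 1) / ((N - 1).choose (k - 1)) * f s (v s))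
        ≤ k * (C * M ^ a) := by
    intro τ hτ hτ0
    calc _ ≤ ((k : ℝ) / τ ^ (N - k)) * (C * M ^ a * τ ^ N) := by
          gcongr
          exact (hinner τ hτ).2
      _ = k * (C * M ^ a) * τ ^ k := by
          have : τ ^ N = τ ^ (N - k) * τ ^ k := by rw [← pow_add]; congr 1; omega
          rw [this]; field_simp
      _ ≤ _ := mul_le_of_le_one_right (by positivity) (pow_le_one₀ hτ.1 hτ.2)
  rw [hpow]
  constructor
  · refine intervalIntegral.integral_nonneg ht.2 fun τ hτ => ?_
    have h0τ := ht.1.trans hτ.1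
    have := (hinner τ ⟨h0τ, hτ.2⟩).1
    positivity
  · have h := intervalIntegral.norm_integral_le_of_norm_le_const (a := t) (b := 1)
      (f := fun τ => (((k : ℝ) / τ ^ (N - k)) *
        ∫ s in (0:ℝ)..τ, s ^ (N - 1) / ((N - 1).choose (k - 1)) * f s (v s)) ^ ((1 : ℝ) / (k : ℝ)))
      (C := (k * (C * M ^ a)) ^ ((1:ℝ) / k)) ?_
    · refine (le_abs_self _).trans (h.trans ?_)
      rw [abs_of_nonneg (by linarith [ht.2])]
      exact mul_le_of_le_one_right (by positivity) (by linarith [ht.1])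
    · intro τ hτ
      rw [uIoc_of_le ht.2] at hτ
      have h0τ := ht.1.trans_lt hτ.1
      have := (hinner τ ⟨h0τ.le, hτ.2⟩).1
      rw [Real.norm_of_nonneg (by positivity)]
      exact Real.rpow_le_rpow (by positivity) (houter τ ⟨h0τ.le, hτ.2⟩ h0τ) (by positivity)

theorem stmt_14 (N n : ℕ) (hN : 2 ≤ N) (hn : 2 ≤ n)
    (k : Fin n → ℕ) (hk : ∀ i, 1 ≤ k i ∧ k i ≤ N)
    (f : Fin n → ℝ → ℝ → ℝ)
    (hfc : ∀ i, ContinuousOn (fun p : ℝ × ℝ => f i p.1 p.2) (Icc (0:ℝ) 1 ×ˢ Ici (0:ℝ)))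
    (hfnn : ∀ i, ∀ t ∈ Icc (0:ℝ) 1, ∀ c ∈ Ici (0:ℝ), 0 ≤ f i t c)
    (hfne : ∀ i, ∃ t ∈ Icc (0:ℝ) 1, ∃ c ∈ Ici (0:ℝ), f i t c ≠ 0)
    (α : Fin n → ℝ) (hα : ∀ i, 0 < α i)
    (h0 : ∀ i, 0 < fUp0 (f i) (α i) ∧ fUp0 (f i) (α i) < ⊤)
    (hαk : ∏ i, (k i : ℝ) < ∏ i, α i) :
    ∃ r > (0:ℝ), ∀ v : ℝ → ℝ, inK v → supNorm v = r →
      supNorm (compT N k f v) < supNorm v := by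
  have hk0 : ∀ i, (0:ℝ) < k i := fun i => by exact_mod_cast (hk i).1
  obtain ⟨D, hD, hT⟩ : PowBd (compT N k f) (∏ i, α i / k i) :=
    powBd_foldr _ _ (fun i => div_pos (hα i) (hk0 i)) fun i =>
      powBd_Thess (hk i).1 (hk i).2 (hα i) (hfc i) (hfnn i) (h0 i).2
  set β := ∏ i, α i / k i with hβ_def
  have hβ : 1 < β := by
    rw [hβ_def, Finset.prod_div_distrib]
    exact (one_lt_div (Finset.prod_pos fun i _ => hk0 i)).2 hαk
  have hsmall : ∀ᶠ r in 𝓝[>] (0:ℝ), D * r ^ (β - 1) < 1 :=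
    ((tendsto_mul_rpow_nhdsGT hD (sub_pos.2 hβ)).mono_right nhdsWithin_le_nhds).eventually
      (gt_mem_nhds one_pos)
  obtain ⟨r, hTr, hr1, hr⟩ := (hT.and (hsmall.and self_mem_nhdsWithin)).exists
  have hr : 0 < r := hr
  refine ⟨r, hr, fun v hv hvr => ?_⟩
  have hvb : ∀ t ∈ Icc (0:ℝ) 1, v t ∈ Icc 0 r := by
    intro t ht
    refine ⟨hv.2.1 t ht, (le_abs_self _).trans ?_⟩
    rw [← hvr]
    exact le_csSup (isCompact_Icc.image_of_continuousOn hv.1.abs).bddAbove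
      (mem_image_of_mem (fun t => |v t|) ht)
  have hle : supNorm (compT N k f v) ≤ D * r ^ β := by
    refine csSup_le ((nonempty_Icc.2 zero_le_one).image _) ?_
    rintro _ ⟨t, ht, rfl⟩
    obtain ⟨h1, h2⟩ := hTr v hvb t ht
    simpa only [abs_of_nonneg h1] using h2
  rw [hvr]
  calc _ ≤ D * r ^ β := hle
    _ = D * r ^ (β - 1) * r := by
        rw [mul_assoc, ← Real.rpow_add_one hr.ne', sub_add_cancel]
    _ < r := mul_lt_of_lt_one_left hr hr1
end

section
/- Assume that for all i = 1,…,n one has f̲_i^∞ ∈ (0,∞) and that the positive exponents satisfy β_1·β_2·⋯·β_n > k_1·k_2·⋯·k_n. Then there exists a constant R > 0 such that every v ∈ K with ‖v‖ = R satisfies ‖T(v)‖ > ‖v‖. -/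
/-!
The supremum norm and the cone `K` enter only through the lower bound on `[1/4, 3/4]`. Let
`Above w m` say that `w` is continuous and nonnegative on `[0,1]` and at least `m` on
`[1/4, 3/4]`. A positive lower limit gives `a > 0` with `f t c ≥ a c ^ β` for all large `c`
(`exists_pow_lower_bound`). If `Above w m` holds with `m` large, then for `τ ∈ [3/4, 1]` the inner
integral in `T_{k,f} w` is at least a constant times `m ^ β`, since it already sees all of
`[1/4, 3/4]`; integrating over `[3/4, 1]` gives `T_{k,f} w ≥ A m ^ (β / k)` on `[0, 3/4]`
(`Above.step`). So each factor sends `Above w m` to `Above (T w) (A m ^ (β / k))`.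

Because `m ↦ A m ^ (β / k)` tends to infinity, these estimates compose for large `m`, and
`compT` sends `Above v m` to `Above (T v) (A m ^ γ)` with `γ = ∏ β_i / k_i` (`Above.comp`). A
`v ∈ K` with `‖v‖ = R` satisfies `Above v (R / 4)`, and `A (R / 4) ^ γ > R` for large `R`
as `γ > 1`.
-/

open Set Filter MeasureTheory

/-- `w` is continuous and nonnegative on `[0,1]`, and bounded below by `m` on `[1/4, 3/4]`. -/
def Above (w : ℝ → ℝ) (m : ℝ) : Prop :=
  ContinuousOn w (Icc (0:ℝ) 1) ∧ (∀ t ∈ Icc (0:ℝ) 1, 0 ≤ w t) ∧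
    ∀ t ∈ Icc (1/4 : ℝ) (3/4 : ℝ), m ≤ w t

lemma exists_pow_lower_bound {f : ℝ → ℝ → ℝ} {β : ℝ}
    (hfnn : ∀ t ∈ Icc (0:ℝ) 1, ∀ c ∈ Ici (0:ℝ), 0 ≤ f t c)
    (h : 0 < fLowInf f β) :
    ∃ a > (0:ℝ), ∃ C : ℝ, ∀ t ∈ Icc (0:ℝ) 1, ∀ c, C ≤ c → a * c ^ β ≤ f t c := by
  obtain ⟨a, ha0, ha⟩ := EReal.lt_iff_exists_real_btwn.1 h
  have hev := Filter.eventually_lt_of_lt_liminf ha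
  obtain ⟨C, hC⟩ := Filter.eventually_atTop.1 (hev.and (Filter.eventually_gt_atTop (0:ℝ)))
  refine ⟨a, by exact_mod_cast ha0, C, fun t ht c hc => ?_⟩
  obtain ⟨h1, hc0⟩ := hC c hc
  have h2 : a < sInf ((fun t => f t c / c ^ β) '' Icc (0:ℝ) 1) := by exact_mod_cast h1
  have hp : 0 < c ^ β := Real.rpow_pos_of_pos hc0 _
  have h3 : sInf ((fun t => f t c / c ^ β) '' Icc (0:ℝ) 1) ≤ f t c / c ^ β := by
    refine csInf_le ⟨0, ?_⟩ ⟨t, ht, rfl⟩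
    rintro _ ⟨s, hs, rfl⟩
    exact div_nonneg (hfnn s hs c hc0.le) hp.le
  exact (le_div_iff₀ hp).1 (h2.le.trans h3)

/-- The outer integrand of `Thess` is integrable on `[0,1]`: the inner integral is at most a
constant times `τ ^ N`, which absorbs the singular factor `1 / τ ^ (N - k)`. -/
lemma outer_integrable {N k : ℕ} (hN : 1 ≤ N) {g : ℝ → ℝ} (hg : ContinuousOn g (Icc (0:ℝ) 1))
    (hg0 : ∀ s ∈ Icc (0:ℝ) 1, 0 ≤ g s) :
    IntegrableOn (fun τ : ℝ => (((k : ℝ) / τ ^ (N - k)) *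
      ∫ s in (0:ℝ)..τ, s ^ (N - 1) / ((N - 1).choose (k - 1)) * g s) ^ ((1 : ℝ) / (k : ℝ)))
      (Icc (0:ℝ) 1) := by
  have hh : ContinuousOn (fun s : ℝ => s ^ (N - 1) / ((N - 1).choose (k - 1)) * g s)
      (Icc (0:ℝ) 1) := by fun_prop
  obtain ⟨M, hM⟩ := isCompact_Icc.exists_bound_of_continuousOn
    (hg.const_mul (1 / ((N - 1).choose (k - 1) : ℝ)))
  have hM0 : 0 ≤ M := (norm_nonneg _).trans (hM 0 (by simp))
  have hprim : ContinuousOn (fun τ => ∫ s in (0:ℝ)..τ,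
      s ^ (N - 1) / ((N - 1).choose (k - 1)) * g s) (Icc (0:ℝ) 1) := by
    have := intervalIntegral.continuousOn_primitive_interval (μ := volume) (a := (0:ℝ)) (b := 1)
      (f := fun s : ℝ => s ^ (N - 1) / ((N - 1).choose (k - 1)) * g s)
      (by rw [uIcc_of_le zero_le_one]; exact hh.integrableOn_Icc)
    rwa [uIcc_of_le zero_le_one] at this
  rw [integrableOn_Icc_iff_integrableOn_Ioc]
  refine Integrable.of_bound ?_ ((k * M) ^ ((1:ℝ) / k)) ?_
  · refine ContinuousOn.aestronglyMeasurable ?_ measurableSet_Ioc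
    refine ContinuousOn.rpow_const ?_ (fun _ _ => Or.inr (by positivity))
    refine ContinuousOn.mul ?_ (hprim.mono Ioc_subset_Icc_self)
    exact continuousOn_const.div (by fun_prop) (fun τ hτ => (pow_pos hτ.1 _).ne')
  · refine (ae_restrict_iff' measurableSet_Ioc).2 (Eventually.of_forall fun τ hτ => ?_)
    have hτ0 : 0 < τ := hτ.1
    have hsub : ∀ s ∈ Icc 0 τ, s ∈ Icc (0:ℝ) 1 := fun s hs => ⟨hs.1, hs.2.trans hτ.2⟩
    have hI0 : 0 ≤ ∫ s in (0:ℝ)..τ, s ^ (N - 1) / ((N - 1).choose (k - 1)) * g s :=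
      intervalIntegral.integral_nonneg hτ0.le fun s hs =>
        mul_nonneg (div_nonneg (pow_nonneg hs.1 _) (Nat.cast_nonneg _)) (hg0 s (hsub s hs))
    have hI1 : ∫ s in (0:ℝ)..τ, s ^ (N - 1) / ((N - 1).choose (k - 1)) * g s ≤ M * τ ^ N := by
      have hn := intervalIntegral.norm_integral_le_of_norm_le_const (a := (0:ℝ)) (b := τ)
        (f := fun s : ℝ => s ^ (N - 1) / ((N - 1).choose (k - 1)) * g s)
        (C := M * τ ^ (N - 1)) (by
          intro s hs
          rw [uIoc_of_le hτ0.le] at hs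
          have hs' : s ∈ Icc (0:ℝ) 1 := ⟨hs.1.le, hs.2.trans hτ.2⟩
          have e : s ^ (N - 1) / ((N - 1).choose (k - 1) : ℝ) * g s
            = (1 / ((N - 1).choose (k - 1) : ℝ) * g s) * s ^ (N - 1) := by ring
          rw [e, norm_mul, norm_pow, Real.norm_of_nonneg hs.1.le]
          exact mul_le_mul (hM s hs') (pow_le_pow_left₀ hs.1.le hs.2 _)
            (pow_nonneg hs.1.le _) hM0)
      refine (le_abs_self _).trans (hn.trans (le_of_eq ?_))
      rw [sub_zero, abs_of_pos hτ0, mul_assoc, ← pow_succ, Nat.sub_add_cancel hN]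
    have hb0 : 0 ≤ (k : ℝ) / τ ^ (N - k) := by positivity
    rw [Real.norm_of_nonneg (Real.rpow_nonneg (mul_nonneg hb0 hI0) _)]
    refine Real.rpow_le_rpow (mul_nonneg hb0 hI0) ?_ (by positivity)
    calc _ ≤ (k : ℝ) / τ ^ (N - k) * (M * τ ^ N) := mul_le_mul_of_nonneg_left hI1 hb0
      _ ≤ (k : ℝ) / τ ^ (N - k) * (M * τ ^ (N - k)) := by
        gcongr ?_ * (_ * ?_)
        exact pow_le_pow_of_le_one hτ0.le hτ.2 (Nat.sub_le _ _)
      _ = k * M := by field_simp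

/-- One factor turns the lower bound `m` into `A m ^ (β / k)`, uniformly for large `m`. -/
lemma Above.step {N k : ℕ} (hk : 1 ≤ k ∧ k ≤ N) {f : ℝ → ℝ → ℝ}
    (hfc : ContinuousOn (fun p : ℝ × ℝ => f p.1 p.2) (Icc (0:ℝ) 1 ×ˢ Ici (0:ℝ)))
    (hfnn : ∀ t ∈ Icc (0:ℝ) 1, ∀ c ∈ Ici (0:ℝ), 0 ≤ f t c) {β : ℝ} (hβ : 0 < β)
    (hInf : 0 < fLowInf f β) :
    ∃ A > (0:ℝ), ∀ᶠ m in atTop, ∀ w, Above w m → Above (Thess N k f w) (A * m ^ (β / k)) := by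
  obtain ⟨a, ha, C, hC⟩ := exists_pow_lower_bound hfnn hInf
  have hk0 : (0:ℝ) < k := by exact_mod_cast hk.1
  have hch : (0:ℝ) < ((N - 1).choose (k - 1) : ℝ) := by
    exact_mod_cast Nat.choose_pos (Nat.sub_le_sub_right hk.2 1)
  set D : ℝ := 1 / 2 * ((1 / 4) ^ (N - 1) / ((N - 1).choose (k - 1) : ℝ) * a) with hD
  have hD0 : 0 < D := by positivity
  refine ⟨1 / 4 * D ^ ((1:ℝ) / k), by positivity, ?_⟩
  filter_upwards [eventually_ge_atTop C, eventually_ge_atTop (0:ℝ)] with m hmC hm0 w hw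
  obtain ⟨hwc, hw0, hwm⟩ := hw
  have hg : ContinuousOn (fun s => f s (w s)) (Icc (0:ℝ) 1) :=
    hfc.comp (continuousOn_id.prodMk hwc) fun s hs => ⟨hs, hw0 s hs⟩
  have hg0 : ∀ s ∈ Icc (0:ℝ) 1, 0 ≤ f s (w s) := fun s hs => hfnn s hs _ (hw0 s hs)
  have hint := outer_integrable (k := k) (hk.1.trans hk.2) hg hg0
  set G : ℝ → ℝ := fun τ => (((k : ℝ) / τ ^ (N - k)) *
      ∫ s in (0:ℝ)..τ, s ^ (N - 1) / ((N - 1).choose (k - 1)) * f s (w s)) ^ ((1 : ℝ) / (k : ℝ))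
    with hG
  have hT : Thess N k f w = fun t => ∫ τ in t..1, G τ := rfl
  have hh : ContinuousOn (fun s : ℝ => s ^ (N - 1) / ((N - 1).choose (k - 1)) * f s (w s))
      (Icc (0:ℝ) 1) :=
    ContinuousOn.mul (by fun_prop) hg
  have hh0 : ∀ s ∈ Icc (0:ℝ) 1,
      0 ≤ s ^ (N - 1) / ((N - 1).choose (k - 1)) * f s (w s) := fun s hs =>
    mul_nonneg (div_nonneg (pow_nonneg hs.1 _) hch.le) (hg0 s hs)
  have hG0 : ∀ τ ∈ Icc (0:ℝ) 1, 0 ≤ G τ := fun τ hτ =>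
    Real.rpow_nonneg (mul_nonneg (div_nonneg hk0.le (pow_nonneg hτ.1 _))
      (intervalIntegral.integral_nonneg hτ.1 fun s hs => hh0 s ⟨hs.1, hs.2.trans hτ.2⟩)) _
  have hGi : ∀ x ∈ Icc (0:ℝ) 1, ∀ y ∈ Icc (0:ℝ) 1, IntervalIntegrable G volume x y :=
    fun x hx y hy => (hint.mono_set (uIcc_subset_Icc hx hy)).intervalIntegrable
  have hhi : ∀ x ∈ Icc (0:ℝ) 1, ∀ y ∈ Icc (0:ℝ) 1, IntervalIntegrable
      (fun s : ℝ => s ^ (N - 1) / ((N - 1).choose (k - 1)) * f s (w s)) volume x y :=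
    fun x hx y hy => (hh.mono (uIcc_subset_Icc hx hy)).intervalIntegrable
  -- Splitting the inner integral at `1/4` and `3/4` and keeping only the middle part.
  have hin : ∀ τ ∈ Icc (3/4:ℝ) 1, D * m ^ β ≤
      ∫ s in (0:ℝ)..τ, s ^ (N - 1) / ((N - 1).choose (k - 1)) * f s (w s) := by
    intro τ hτ
    have h0 : (0:ℝ) ∈ Icc (0:ℝ) 1 := by simp
    have h1 : (1/4:ℝ) ∈ Icc (0:ℝ) 1 := by constructor <;> norm_num
    have h3 : (3/4:ℝ) ∈ Icc (0:ℝ) 1 := by constructor <;> norm_num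
    have ht : τ ∈ Icc (0:ℝ) 1 := ⟨by linarith [hτ.1], hτ.2⟩
    rw [← intervalIntegral.integral_add_adjacent_intervals (hhi 0 h0 (3/4) h3) (hhi (3/4) h3 τ ht),
      ← intervalIntegral.integral_add_adjacent_intervals (hhi 0 h0 (1/4) h1) (hhi _ h1 _ h3)]
    have e1 : 0 ≤ ∫ s in (0:ℝ)..(1/4),
        s ^ (N - 1) / ((N - 1).choose (k - 1)) * f s (w s) :=
      intervalIntegral.integral_nonneg (by norm_num) fun s hs => hh0 s ⟨hs.1, by linarith [hs.2]⟩
    have e3 : 0 ≤ ∫ s in (3/4:ℝ)..τ,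
        s ^ (N - 1) / ((N - 1).choose (k - 1)) * f s (w s) :=
      intervalIntegral.integral_nonneg hτ.1 fun s hs =>
        hh0 s ⟨by linarith [hs.1], hs.2.trans hτ.2⟩
    have e2 : ∫ _s in (1/4:ℝ)..(3/4),
          (1 / 4 : ℝ) ^ (N - 1) / ((N - 1).choose (k - 1)) * (a * m ^ β) ≤
        ∫ s in (1/4:ℝ)..(3/4), s ^ (N - 1) / ((N - 1).choose (k - 1)) * f s (w s) := by
      refine intervalIntegral.integral_mono_on (by norm_num) (by simp) (hhi _ h1 _ h3) ?_
      intro s hs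
      have hs' : s ∈ Icc (0:ℝ) 1 := ⟨by linarith [hs.1], by linarith [hs.2]⟩
      have hwf : a * m ^ β ≤ f s (w s) :=
        (mul_le_mul_of_nonneg_left (Real.rpow_le_rpow hm0 (hwm s hs) hβ.le) ha.le).trans
          (hC s hs' _ (hmC.trans (hwm s hs)))
      refine mul_le_mul ?_ hwf (by positivity) (div_nonneg (pow_nonneg hs'.1 _) hch.le)
      exact div_le_div_of_nonneg_right (pow_le_pow_left₀ (by norm_num) hs.1 _) hch.le
    rw [intervalIntegral.integral_const, smul_eq_mul] at e2
    have e4 : (3 / 4 - 1 / 4 : ℝ) *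
        ((1 / 4 : ℝ) ^ (N - 1) / ((N - 1).choose (k - 1)) * (a * m ^ β)) = D * m ^ β := by
      rw [hD]; ring
    linarith
  have hGlow : ∀ τ ∈ Icc (3/4:ℝ) 1, D ^ ((1:ℝ) / k) * m ^ (β / k) ≤ G τ := by
    intro τ hτ
    have hτ0 : 0 < τ := by linarith [hτ.1]
    have e : D ^ ((1:ℝ) / k) * m ^ (β / k) = (D * m ^ β) ^ ((1:ℝ) / k) := by
      rw [Real.mul_rpow hD0.le (by positivity), ← Real.rpow_mul hm0, mul_one_div]
    rw [e]
    refine Real.rpow_le_rpow (by positivity) ?_ (by positivity)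
    have hfac : 1 ≤ (k : ℝ) / τ ^ (N - k) := by
      rw [one_le_div (by positivity)]
      exact (pow_le_one₀ hτ0.le hτ.2).trans (by exact_mod_cast hk.1)
    have hDm : 0 ≤ D * m ^ β := by positivity
    calc D * m ^ β = 1 * (D * m ^ β) := (one_mul _).symm
      _ ≤ _ := mul_le_mul hfac (hin τ hτ) hDm (by positivity)
  rw [hT]
  refine ⟨?_, fun t ht => ?_, fun t ht => ?_⟩
  · have := intervalIntegral.continuousOn_primitive_interval_left (μ := volume) (a := (0:ℝ))
      (b := 1) (f := G) (by rwa [uIcc_of_le zero_le_one])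
    rwa [uIcc_of_le zero_le_one] at this
  · exact intervalIntegral.integral_nonneg ht.2 fun τ hτ => hG0 τ ⟨ht.1.trans hτ.1, hτ.2⟩
  · have h1 : (1:ℝ) ∈ Icc (0:ℝ) 1 := by simp
    have h3 : (3/4:ℝ) ∈ Icc (0:ℝ) 1 := by constructor <;> norm_num
    have ht' : t ∈ Icc (0:ℝ) 1 := ⟨by linarith [ht.1], by linarith [ht.2]⟩
    change _ ≤ ∫ τ in t..1, G τ
    rw [← intervalIntegral.integral_add_adjacent_intervals (hGi t ht' _ h3) (hGi _ h3 1 h1)]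
    have e1 : 0 ≤ ∫ τ in t..(3/4), G τ :=
      intervalIntegral.integral_nonneg ht.2 fun τ hτ =>
        hG0 τ ⟨ht'.1.trans hτ.1, by linarith [hτ.2]⟩
    have e2 : ∫ _τ in (3/4:ℝ)..1, D ^ ((1:ℝ) / k) * m ^ (β / k) ≤ ∫ τ in (3/4:ℝ)..1, G τ :=
      intervalIntegral.integral_mono_on (by norm_num) (by simp) (hGi _ h3 1 h1) hGlow
    rw [intervalIntegral.integral_const, smul_eq_mul] at e2
    linarith

/-- The composite turns the lower bound `m` into `A m ^ (∏ β_i / k_i)`, uniformly for large `m`. -/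
lemma Above.comp (N : ℕ) : ∀ (n : ℕ) (k : Fin n → ℕ) (_ : ∀ i, 1 ≤ k i ∧ k i ≤ N)
    (f : Fin n → ℝ → ℝ → ℝ)
    (_ : ∀ i, ContinuousOn (fun p : ℝ × ℝ => f i p.1 p.2) (Icc (0:ℝ) 1 ×ˢ Ici (0:ℝ)))
    (_ : ∀ i, ∀ t ∈ Icc (0:ℝ) 1, ∀ c ∈ Ici (0:ℝ), 0 ≤ f i t c)
    (β : Fin n → ℝ) (_ : ∀ i, 0 < β i) (_ : ∀ i, 0 < fLowInf (f i) (β i)),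
    ∃ A > (0:ℝ), ∀ᶠ m in atTop, ∀ v, Above v m →
      Above (compT N k f v) (A * m ^ (∏ i, β i / (k i : ℝ))) := by
  intro n
  induction n with
  | zero =>
    intro k _ f _ _ β _ _
    exact ⟨1, one_pos, Eventually.of_forall fun m v hv => by simpa [compT] using hv⟩
  | succ n ih =>
    intro k hk f hfc hfnn β hβ hInf
    obtain ⟨A', hA', h'⟩ := ih (fun i => k i.succ) (fun i => hk _) (fun i => f i.succ)
      (fun i => hfc _) (fun i => hfnn _) (fun i => β i.succ) (fun i => hβ _) (fun i => hInf _)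
    obtain ⟨A, hA, h⟩ := Above.step (hk 0) (hfc 0) (hfnn 0) (hβ 0) (hInf 0)
    have hk0 : ∀ i, (0:ℝ) < k i := fun i => by exact_mod_cast (hk i).1
    set γ := ∏ i : Fin n, β i.succ / (k i.succ : ℝ) with hγ
    have hγ0 : 0 < γ := Finset.prod_pos fun i _ => div_pos (hβ _) (hk0 _)
    have htend : Tendsto (fun m : ℝ => A' * m ^ γ) atTop atTop :=
      (tendsto_rpow_atTop hγ0).const_mul_atTop hA'
    refine ⟨A * A' ^ (β 0 / (k 0 : ℝ)), by positivity, ?_⟩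
    filter_upwards [h', htend.eventually h, eventually_ge_atTop (0:ℝ)] with m h1 h2 hm0 v hv
    have h3 := h2 _ (h1 v hv)
    have e1 : compT N k f v =
        Thess N (k 0) (f 0) (compT N (fun i => k i.succ) (fun i => f i.succ) v) := by
      simp [compT, List.ofFn_succ]
    rw [Real.mul_rpow hA'.le (by positivity), ← Real.rpow_mul hm0] at h3
    rw [e1, Fin.prod_univ_succ, mul_comm (β 0 / (k 0 : ℝ)), mul_assoc]
    exact h3

theorem stmt_15 (N n : ℕ) (hN : 2 ≤ N) (hn : 2 ≤ n)
    (k : Fin n → ℕ) (hk : ∀ i, 1 ≤ k i ∧ k i ≤ N)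
    (f : Fin n → ℝ → ℝ → ℝ)
    (hfc : ∀ i, ContinuousOn (fun p : ℝ × ℝ => f i p.1 p.2) (Icc (0:ℝ) 1 ×ˢ Ici (0:ℝ)))
    (hfnn : ∀ i, ∀ t ∈ Icc (0:ℝ) 1, ∀ c ∈ Ici (0:ℝ), 0 ≤ f i t c)
    (hfne : ∀ i, ∃ t ∈ Icc (0:ℝ) 1, ∃ c ∈ Ici (0:ℝ), f i t c ≠ 0)
    (β : Fin n → ℝ) (hβ : ∀ i, 0 < β i)
    (hInf : ∀ i, 0 < fLowInf (f i) (β i) ∧ fLowInf (f i) (β i) < ⊤)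
    (hβk : ∏ i, (k i : ℝ) < ∏ i, β i) :
    ∃ R > (0:ℝ), ∀ v : ℝ → ℝ, inK v → supNorm v = R →
      supNorm v < supNorm (compT N k f v) := by
  obtain ⟨A, hA, h⟩ := Above.comp N n k hk f hfc hfnn β hβ fun i => (hInf i).1
  have hk0 : ∀ i, (0:ℝ) < k i := fun i => by exact_mod_cast (hk i).1
  set γ := ∏ i, β i / (k i : ℝ) with hγ
  have hγ1 : 1 < γ := by
    rw [hγ, Finset.prod_div_distrib, one_lt_div (Finset.prod_pos fun i _ => hk0 i)]
    exact hβk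
  have htend : Tendsto (fun m : ℝ => A * m ^ (γ - 1)) atTop atTop :=
    (tendsto_rpow_atTop (sub_pos.2 hγ1)).const_mul_atTop hA
  obtain ⟨m, hm, hm4, hm0⟩ :=
    (h.and ((htend.eventually_gt_atTop 4).and (eventually_gt_atTop (0:ℝ)))).exists
  refine ⟨4 * m, by positivity, fun v hv hvR => ?_⟩
  have hv' : Above v m :=
    ⟨hv.1, hv.2.1, fun t ht => by have := hv.2.2 t ht; rw [hvR] at this; linarith⟩
  obtain ⟨hTc, -, hTm⟩ := hm v hv'
  have h1 : (1/4:ℝ) ∈ Icc (0:ℝ) 1 := by constructor <;> norm_num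
  have hle : |compT N k f v (1/4)| ≤ supNorm (compT N k f v) :=
    le_csSup (isCompact_Icc.image_of_continuousOn hTc.abs).bddAbove ⟨1/4, h1, rfl⟩
  have hlow := hTm (1/4) (by constructor <;> norm_num)
  have hgt : 4 * m < A * m ^ γ := by
    calc 4 * m < A * m ^ (γ - 1) * m := mul_lt_mul_of_pos_right hm4 hm0
      _ = A * m ^ γ := by
        rw [mul_assoc, ← Real.rpow_add_one hm0.ne', sub_add_cancel]
  rw [hvR]
  exact hgt.trans_le (hlow.trans ((le_abs_self _).trans hle))
end
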